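/- arXiv:0804.2282 — 2 statements merged into one kernel-verified Lean document; each statement's English description precedes it below -/
import Mathlib

section
/- For any fixed ε > 0 there exists a smooth map ξ = ξ(y,E) on (y,E) ∈ (ε,∞) × (0,E₀), with E₀ small, such that ξ(E^{1/2} x₁(E;ℏ), E) = 1 and for all (y,E) in this range, 1 − E^{-1} V₀(E^{-1/2} y;ℏ) = (dξ/dy)² (1 − ξ^{-2}). Moreover, with some function ξ₀(E): ξ(y,E) = y + ξ₀(E) + y^{-1} ρ₀(y,E); the derivative bounds |∂_E^k ∂_y^ℓ ξ(y,E)| ≤ C_{k,ℓ} E^{-k} y^{1−ℓ} hold for all k,ℓ ≥ 0; and |∂_E^k ξ₀(E)| ≤ C_k E^{-k}, |∂_E^k ∂_y^j ρ₀(y,E)| ≤ C_{jk} y^{-j} E^{-k} for all k,j ≥ 0, uniformly on (y,E) ∈ (1,∞) × (0,E₀). For fixed 0 < E < E₀ the map y ↦ ξ(y,E) is a global diffeomorphism whose inverse y = y(ξ,E) satisfies y(ξ,E) = ξ + y₀(E) + ξ^{-1} ρ̃₀(ξ,E) and |∂_E^k ∂_ξ^ℓ y(ξ,E)| ≤ C_{k,ℓ}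 E^{-k} ξ^{1−ℓ} for all k,ℓ ≥ 0, with y₀, ρ̃₀ obeying the same bounds as ξ₀, ρ₀ (relative to ξ rather than y). All constants may depend on ε. -/
/-- The modified potential `V₀(x;ℏ) = V(x) + (ℏ²/4)⟨x⟩⁻²` where `⟨x⟩ = √(1+x²)`. -/
noncomputable def V0 (V : ℝ → ℝ) (h x : ℝ) : ℝ := V x + h ^ 2 / 4 * (1 + x ^ 2)⁻¹

/-!
In the variables `u = log y`, `t = log E` and `v = log ξ` the equation reads
`e^{2u} - e^{2γ} = (e^{2v} - 1) (∂_u v)²`, where the log potential `γ = γ(u, t)` has bounded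
derivatives of all orders and `|∂_u γ| ≤ 1/2`. For any such `γ`, Langer's variable
`S = (∫ √(e^{2u} - e^{2γ}) du)^{2/3}`, integrated from the turning point `u = γ` and continued
smoothly through it, satisfies `e^{2u} - e^{2γ} = (9/4) S (∂_u S)²`. The equation is therefore
solved by `S_0(v, t) = S_γ(u, t)`, where `S_0` is the variable of the zero log potential. Since
`S^{3/2}` is `e^u` plus a function of `t` plus `O(e^{-u})` as `u → +∞`, `ξ` is a shift of `y` up to
`O(1/y)`; and bounds on all derivatives in `(u, t)` are the symbol estimates in `(y, E)`.
-/

open Set Filter Topology MeasureTheory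
open scoped ContDiff

theorem le_of_natCast_add_one_le_add_one {n : ℕ} {N : WithTop ℕ∞}
    (h : (n : WithTop ℕ∞) + 1 ≤ N + 1) : n ≤ N := by
  cases N with
  | top => exact le_top
  | coe N =>
    cases N with
    | top => exact_mod_cast le_top
    | coe N => exact_mod_cast Nat.le_of_succ_le_succ (by exact_mod_cast h)

section BoundedDerivatives

variable {E F G : Type*} [NormedAddCommGroup E] [NormedSpace ℝ E] [NormedAddCommGroup F]
  [NormedSpace ℝ F] [NormedAddCommGroup G] [NormedSpace ℝ G]

/-- `f` is of class `C^N` at the points of `s`, and its derivatives of order `m ≤ n ≤ N` are bounded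
on `s`. The case `m = 0` is that of a bounded function with bounded derivatives; the case `m = 1`
also covers coordinate changes, which are unbounded. -/
structure HasBddDerivs (m : ℕ) (N : WithTop ℕ∞) (f : E → F) (s : Set E) : Prop where
  contDiffAt : ∀ x ∈ s, ContDiffAt ℝ N f x
  exists_bound : ∀ n : ℕ, m ≤ n → n ≤ N → ∃ C, ∀ x ∈ s, ‖iteratedFDeriv ℝ n f x‖ ≤ C

/-- `f` is smooth at the points of `s`, and is bounded on `s` together with all its derivatives. -/
abbrev BddSmooth (f : E → F) (s : Set E) : Prop := HasBddDerivs 0 ∞ f s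

theorem norm_iteratedFDeriv_comp_le_of_contDiffAt {g : F → G} {f : E → F} {x : E} {n : ℕ}
    {C D : ℝ} (hg : ContDiffAt ℝ n g (f x)) (hf : ContDiffAt ℝ n f x)
    (hC : ∀ i ≤ n, ‖iteratedFDeriv ℝ i g (f x)‖ ≤ C)
    (hD : ∀ i, 1 ≤ i → i ≤ n → ‖iteratedFDeriv ℝ i f x‖ ≤ D ^ i) :
    ‖iteratedFDeriv ℝ n (fun y => g (f y)) x‖ ≤ n.factorial * C * D ^ n := by
  obtain ⟨t, ht, hto, hxt⟩ := eventually_nhds_iff.1 (hg.eventually (by simp))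
  obtain ⟨u, hu, huo, hxu⟩ := eventually_nhds_iff.1
    ((hf.eventually (by simp)).and (hf.continuousAt.eventually_mem (hto.mem_nhds hxt)))
  have h := norm_iteratedFDerivWithin_comp_le (fun y hy => (ht y hy).contDiffWithinAt)
    (fun y hy => (hu y hy).1.contDiffWithinAt) le_rfl hto.uniqueDiffOn huo.uniqueDiffOn
    (fun y hy => (hu y hy).2) hxu (C := C) (D := D)
  simp only [iteratedFDerivWithin_of_isOpen _ huo hxu, iteratedFDerivWithin_of_isOpen _ hto hxt]
    at h
  exact h hC hD

namespace HasBddDerivs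

variable {m : ℕ} {N : WithTop ℕ∞} {f g : E → F} {s t : Set E}

theorem mono (h : HasBddDerivs m N f t) (hst : s ⊆ t) : HasBddDerivs m N f s where
  contDiffAt x hx := h.contDiffAt x (hst hx)
  exists_bound n hmn hnN :=
    let ⟨C, hC⟩ := h.exists_bound n hmn hnN
    ⟨C, fun x hx => hC x (hst hx)⟩

theorem of_le {m' : ℕ} {N' : WithTop ℕ∞} (h : HasBddDerivs m N f s) (hm : m ≤ m') (hN : N' ≤ N) :
    HasBddDerivs m' N' f s where
  contDiffAt x hx := (h.contDiffAt x hx).of_le hN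
  exists_bound n hmn hnN := h.exists_bound n (hm.trans hmn) (hnN.trans hN)

theorem infty_of_nat (h : ∀ n : ℕ, HasBddDerivs m n f s) : HasBddDerivs m ∞ f s where
  contDiffAt x hx := contDiffAt_infty.2 fun n => (h n).contDiffAt x hx
  exists_bound n hmn _ := (h n).exists_bound n hmn le_rfl

theorem exists_norm_le (h : HasBddDerivs 0 N f s) : ∃ C, ∀ x ∈ s, ‖f x‖ ≤ C := by
  simpa using h.exists_bound 0 le_rfl (by simp)

theorem of_exists_norm_le (h : HasBddDerivs 1 N f s) (hf : ∃ C, ∀ x ∈ s, ‖f x‖ ≤ C) :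
    HasBddDerivs 0 N f s where
  contDiffAt := h.contDiffAt
  exists_bound n _ hn := by
    rcases Nat.eq_zero_or_pos n with rfl | hpos
    · simpa using hf
    · exact h.exists_bound n hpos hn

theorem zero_of_continuousOn (hs : IsOpen s) (hf : ContinuousOn f s)
    (hb : m = 0 → ∃ C, ∀ x ∈ s, ‖f x‖ ≤ C) : HasBddDerivs m 0 f s where
  contDiffAt x hx := (contDiffOn_zero.2 hf).contDiffAt (hs.mem_nhds hx)
  exists_bound n hmn hn := by
    obtain rfl : n = 0 := by simpa using hn
    simpa using hb (Nat.le_zero.1 hmn)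

theorem contDiffOn (h : HasBddDerivs m N f s) : ContDiffOn ℝ N f s :=
  fun x hx => (h.contDiffAt x hx).contDiffWithinAt

theorem union (hs : HasBddDerivs m N f s) (ht : HasBddDerivs m N f t) :
    HasBddDerivs m N f (s ∪ t) where
  contDiffAt x hx := hx.elim (hs.contDiffAt x) (ht.contDiffAt x)
  exists_bound n hmn hnN := by
    obtain ⟨C, hC⟩ := hs.exists_bound n hmn hnN
    obtain ⟨D, hD⟩ := ht.exists_bound n hmn hnN
    exact ⟨max C D, fun x hx => hx.elim (fun hx => (hC x hx).trans (le_max_left _ _))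
      fun hx => (hD x hx).trans (le_max_right _ _)⟩

theorem congr (h : HasBddDerivs m N f s) (hs : IsOpen s) (hfg : EqOn f g s) :
    HasBddDerivs m N g s where
  contDiffAt x hx := (h.contDiffAt x hx).congr_of_eventuallyEq
    (hfg.symm.eventuallyEq_of_mem (hs.mem_nhds hx))
  exists_bound n hmn hnN := by
    obtain ⟨C, hC⟩ := h.exists_bound n hmn hnN
    refine ⟨C, fun x hx => ?_⟩
    rw [((hfg.symm.eventuallyEq_of_mem (hs.mem_nhds hx)).iteratedFDeriv ℝ n).eq_of_nhds]
    exact hC x hx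

theorem of_contDiffOn_of_isCompact {K O : Set E} {f : E → F} (hf : ContDiffOn ℝ N f O)
    (hO : IsOpen O) (hK : IsCompact K) (hKO : K ⊆ O) : HasBddDerivs 0 N f K where
  contDiffAt x hx := hf.contDiffAt (hO.mem_nhds (hKO hx))
  exists_bound n _ hnN := by
    refine hK.exists_bound_of_continuousOn fun x hx => ?_
    exact ((hf.contDiffAt (hO.mem_nhds (hKO hx))).continuousAt_iteratedFDeriv
      hnN).continuousWithinAt

theorem const (c : F) : HasBddDerivs 0 N (fun _ : E => c) s where
  contDiffAt _ _ := contDiffAt_const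
  exists_bound n _ _ := by
    rcases Nat.eq_zero_or_pos n with rfl | hpos
    · exact ⟨‖c‖, fun x _ => by simp⟩
    · exact ⟨0, fun x _ => by simp [iteratedFDeriv_const_of_ne hpos.ne']⟩

theorem clm_comp (L : F →L[ℝ] G) (h : HasBddDerivs m N f s) :
    HasBddDerivs m N (fun x => L (f x)) s where
  contDiffAt x hx := (h.contDiffAt x hx).continuousLinearMap_comp L
  exists_bound n hmn hnN := by
    obtain ⟨C, hC⟩ := h.exists_bound n hmn hnN
    refine ⟨‖L‖ * C, fun x hx => ?_⟩
    exact (L.norm_iteratedFDeriv_comp_left (h.contDiffAt x hx) hnN).trans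
      (mul_le_mul_of_nonneg_left (hC x hx) (norm_nonneg _))

theorem prodMk {g : E → G} (hf : HasBddDerivs m N f s) (hg : HasBddDerivs m N g s) :
    HasBddDerivs m N (fun x => (f x, g x)) s where
  contDiffAt x hx := (hf.contDiffAt x hx).prodMk (hg.contDiffAt x hx)
  exists_bound n hmn hnN := by
    obtain ⟨C, hC⟩ := hf.exists_bound n hmn hnN
    obtain ⟨D, hD⟩ := hg.exists_bound n hmn hnN
    refine ⟨max C D, fun x hx => ?_⟩
    rw [iteratedFDeriv_prodMk (hf.contDiffAt x hx) (hg.contDiffAt x hx) hnN,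
      ContinuousMultilinearMap.opNorm_prod]
    exact max_le_max (hC x hx) (hD x hx)

theorem add (hf : HasBddDerivs m N f s) (hg : HasBddDerivs m N g s) :
    HasBddDerivs m N (fun x => f x + g x) s :=
  (hf.prodMk hg).clm_comp
    (ContinuousLinearMap.fst ℝ F F + ContinuousLinearMap.snd ℝ F F)

theorem sub (hf : HasBddDerivs m N f s) (hg : HasBddDerivs m N g s) :
    HasBddDerivs m N (fun x => f x - g x) s :=
  (hf.prodMk hg).clm_comp
    (ContinuousLinearMap.fst ℝ F F - ContinuousLinearMap.snd ℝ F F)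

theorem neg (hf : HasBddDerivs m N f s) : HasBddDerivs m N (fun x => -f x) s :=
  hf.clm_comp (-.id ℝ F)

theorem clm (L : E →L[ℝ] F) : HasBddDerivs 1 N L s where
  contDiffAt _ _ := L.contDiff.contDiffAt
  exists_bound n hn _ := by
    obtain ⟨k, rfl⟩ := Nat.exists_eq_add_of_le' hn
    obtain ⟨C, hC⟩ := (const L (s := s)).exists_bound k (Nat.zero_le k) le_top
    have hL : fderiv ℝ L = fun _ => L := funext fun _ => L.fderiv
    exact ⟨C, fun x hx => by rw [← norm_iteratedFDeriv_fderiv, hL]; exact hC x hx⟩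

protected theorem id : HasBddDerivs 1 N (fun x : E => x) s := clm (.id ℝ E)

theorem exists_forall_bound (h : HasBddDerivs m N f s) {n : ℕ} (hn : n ≤ N) :
    ∃ C, 1 ≤ C ∧ ∀ i, m ≤ i → i ≤ n → ∀ x ∈ s, ‖iteratedFDeriv ℝ i f x‖ ≤ C := by
  choose! C hC using fun i (hi : m ≤ i ∧ i ≤ n) =>
    h.exists_bound i hi.1 ((Nat.cast_le.2 hi.2).trans hn)
  refine ⟨1 + ∑ i ∈ Finset.range (n + 1), |C i|,
    le_add_of_nonneg_right (Finset.sum_nonneg fun i _ => abs_nonneg (C i)),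
    fun i hmi hin x hx => (hC i ⟨hmi, hin⟩ x hx).trans ((le_abs_self _).trans ?_)⟩
  exact (Finset.single_le_sum (f := fun j => |C j|) (fun j _ => abs_nonneg _)
    (Finset.mem_range_succ_iff.2 hin)).trans (le_add_of_nonneg_left zero_le_one)

theorem comp {g : F → G} {t : Set F} (hg : HasBddDerivs 0 N g t) (hf : HasBddDerivs m N f s)
    (hst : MapsTo f s t) (hm : m ≤ 1 := by simp) : HasBddDerivs 0 N (fun x => g (f x)) s where
  contDiffAt x hx := (hg.contDiffAt _ (hst hx)).comp x (hf.contDiffAt x hx)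
  exists_bound n _ hn := by
    obtain ⟨C, -, hC⟩ := hg.exists_forall_bound hn
    obtain ⟨D, hD1, hD⟩ := hf.exists_forall_bound hn
    refine ⟨n.factorial * C * D ^ n, fun x hx => norm_iteratedFDeriv_comp_le_of_contDiffAt
      ((hg.contDiffAt _ (hst hx)).of_le hn) ((hf.contDiffAt x hx).of_le hn)
      (fun i hi => hC i (Nat.zero_le i) hi _ (hst hx)) fun i h1i hi => ?_⟩
    exact (hD i (hm.trans h1i) hi x hx).trans (le_self_pow₀ hD1 (Nat.one_le_iff_ne_zero.1 h1i))

theorem comp_of_isCompact {φ : F → G} {K O : Set F} (hf : HasBddDerivs m N f s)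
    (hφ : ContDiffOn ℝ N φ O) (hO : IsOpen O) (hK : IsCompact K) (hKO : K ⊆ O)
    (hfK : MapsTo f s K) (hm : m ≤ 1 := by simp) : HasBddDerivs 0 N (fun x => φ (f x)) s :=
  (of_contDiffOn_of_isCompact hφ hO hK hKO).comp hf hfK hm

protected theorem fderiv (h : HasBddDerivs m (N + 1) f s) (hm : m ≤ 1 := by simp) :
    HasBddDerivs 0 N (fderiv ℝ f) s where
  contDiffAt x hx := (h.contDiffAt x hx).fderiv_right le_rfl
  exists_bound n _ hn := by
    obtain ⟨C, hC⟩ := h.exists_bound (n + 1) (hm.trans (Nat.le_add_left 1 n))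
      (by push_cast; gcongr)
    exact ⟨C, fun x hx => norm_iteratedFDeriv_fderiv.trans_le (hC x hx)⟩

theorem of_hasFDerivAt {f' : E → E →L[ℝ] F} (hs : IsOpen s)
    (hf : ∀ x ∈ s, HasFDerivAt f (f' x) x) (hf' : HasBddDerivs 0 N f' s)
    (hN : N ≠ ω := by simp) : HasBddDerivs 1 (N + 1) f s := by
  have h := hf'.congr hs fun x hx => (hf x hx).fderiv.symm
  refine ⟨fun x hx => ContDiffOn.contDiffAt (s := s) ?_ (hs.mem_nhds hx), fun k hk hkN => ?_⟩
  · rw [contDiffOn_succ_iff_fderiv_of_isOpen hs]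
    exact ⟨fun y hy => (hf y hy).differentiableAt.differentiableWithinAt, fun h => (hN h).elim,
      h.contDiffOn⟩
  · obtain ⟨j, rfl⟩ := Nat.exists_eq_add_of_le' hk
    obtain ⟨C, hC⟩ := h.exists_bound j (Nat.zero_le j)
      (le_of_natCast_add_one_le_add_one (by exact_mod_cast hkN))
    exact ⟨C, fun x hx => norm_iteratedFDeriv_fderiv.symm.trans_le (hC x hx)⟩

section Real

variable {f g : E → ℝ}

theorem exists_mapsTo_Icc (h : HasBddDerivs 0 N f s) : ∃ C, MapsTo f s (Icc (-C) C) :=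
  h.exists_norm_le.imp fun _ hC x hx => abs_le.1 (hC x hx)

theorem mul (hf : HasBddDerivs 0 N f s) (hg : HasBddDerivs 0 N g s) :
    HasBddDerivs 0 N (fun x => f x * g x) s := by
  obtain ⟨C, hC⟩ := hf.exists_mapsTo_Icc
  obtain ⟨D, hD⟩ := hg.exists_mapsTo_Icc
  exact (hf.prodMk hg).comp_of_isCompact contDiff_mul.contDiffOn
    isOpen_univ (isCompact_Icc.prod isCompact_Icc) (subset_univ _)
    fun x hx => ⟨hC hx, hD hx⟩

theorem const_mul (k : ℝ) (hf : HasBddDerivs m N f s) : HasBddDerivs m N (fun x => k * f x) s :=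
  hf.clm_comp (k • .id ℝ ℝ)

theorem comp_contDiff {φ : ℝ → F} (hφ : ContDiff ℝ N φ) (hf : HasBddDerivs 0 N f s) :
    HasBddDerivs 0 N (fun x => φ (f x)) s :=
  hf.exists_mapsTo_Icc.elim fun _ hC => hf.comp_of_isCompact
    hφ.contDiffOn isOpen_univ isCompact_Icc (subset_univ _) hC

theorem exp (hf : HasBddDerivs 0 N f s) : HasBddDerivs 0 N (fun x => Real.exp (f x)) s :=
  hf.comp_contDiff Real.contDiff_exp

theorem comp_pos {φ : ℝ → F} (hφ : ∀ x, 0 < x → ContDiffAt ℝ N φ x)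
    (hf : HasBddDerivs 0 N f s) {c : ℝ} (hc : 0 < c) (hcf : ∀ x ∈ s, c ≤ f x) :
    HasBddDerivs 0 N (fun x => φ (f x)) s :=
  hf.exists_mapsTo_Icc.elim fun C hC => hf.comp_of_isCompact
    (fun x hx => (hφ x hx).contDiffWithinAt) isOpen_Ioi (isCompact_Icc (a := c) (b := C))
    (fun _ hx => hc.trans_le hx.1) fun x hx => ⟨hcf x hx, (hC hx).2⟩

theorem rpow (hf : HasBddDerivs 0 N f s) (r : ℝ) {c : ℝ} (hc : 0 < c) (hcf : ∀ x ∈ s, c ≤ f x) :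
    HasBddDerivs 0 N (fun x => f x ^ r) s :=
  hf.comp_pos (φ := fun x => x ^ r) (fun _ hx => Real.contDiffAt_rpow_const_of_ne hx.ne') hc hcf

theorem sqrt (hf : HasBddDerivs 0 N f s) {c : ℝ} (hc : 0 < c) (hcf : ∀ x ∈ s, c ≤ f x) :
    HasBddDerivs 0 N (fun x => √(f x)) s :=
  hf.comp_pos (fun _ hx => Real.contDiffAt_sqrt hx.ne') hc hcf

theorem inv (hf : HasBddDerivs 0 N f s) {c : ℝ} (hc : 0 < c) (hcf : ∀ x ∈ s, c ≤ f x) :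
    HasBddDerivs 0 N (fun x => (f x)⁻¹) s :=
  hf.comp_pos (fun _ hx => contDiffAt_inv ℝ hx.ne') hc hcf

theorem log (hf : HasBddDerivs 0 N f s) {c : ℝ} (hc : 0 < c) (hcf : ∀ x ∈ s, c ≤ f x) :
    HasBddDerivs 0 N (fun x => Real.log (f x)) s :=
  hf.comp_pos (fun _ hx => Real.contDiffAt_log.2 hx.ne') hc hcf

end Real

end HasBddDerivs

end BoundedDerivatives

section Partials

/-- The partial derivative in the first variable. -/
noncomputable def partialFst (f : ℝ × ℝ → ℝ) (p : ℝ × ℝ) : ℝ := fderiv ℝ f p (1, 0)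

/-- The partial derivative in the second variable. -/
noncomputable def partialSnd (f : ℝ × ℝ → ℝ) (p : ℝ × ℝ) : ℝ := fderiv ℝ f p (0, 1)

/-- `f` is differentiable at `p`, with partial derivatives `a` and `b`. -/
def HasPartialsAt (f : ℝ × ℝ → ℝ) (a b : ℝ) (p : ℝ × ℝ) : Prop :=
  HasFDerivAt f (a • ContinuousLinearMap.fst ℝ ℝ ℝ + b • ContinuousLinearMap.snd ℝ ℝ ℝ) p

namespace HasPartialsAt

variable {f g : ℝ × ℝ → ℝ} {a b c d : ℝ} {p : ℝ × ℝ}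

theorem partialFst_eq (h : HasPartialsAt f a b p) : partialFst f p = a := by
  simp [partialFst, HasFDerivAt.fderiv h]

theorem differentiableAt (h : HasPartialsAt f a b p) : DifferentiableAt ℝ f p :=
  HasFDerivAt.differentiableAt h

theorem of_hasFDerivAt {L : ℝ × ℝ →L[ℝ] ℝ} (h : HasFDerivAt f L p) :
    HasPartialsAt f (L (1, 0)) (L (0, 1)) p :=
  h.congr_fderiv (by ext <;> simp)

theorem of_differentiableAt (h : DifferentiableAt ℝ f p) :
    HasPartialsAt f (partialFst f p) (partialSnd f p) p :=
  of_hasFDerivAt h.hasFDerivAt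

theorem congr_partials (h : HasPartialsAt f a b p) (ha : a = c) (hb : b = d) :
    HasPartialsAt f c d p := ha ▸ hb ▸ h

theorem fst : HasPartialsAt Prod.fst 1 0 p :=
  hasFDerivAt_fst.congr_fderiv (by simp)

theorem snd : HasPartialsAt Prod.snd 0 1 p :=
  hasFDerivAt_snd.congr_fderiv (by simp)

theorem const (k : ℝ) : HasPartialsAt (fun _ => k) 0 0 p :=
  (hasFDerivAt_const k p).congr_fderiv (by simp)

theorem add (hf : HasPartialsAt f a b p) (hg : HasPartialsAt g c d p) :
    HasPartialsAt (fun q => f q + g q) (a + c) (b + d) p :=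
  (HasFDerivAt.add hf hg).congr_fderiv (by ext <;> simp)

theorem sub (hf : HasPartialsAt f a b p) (hg : HasPartialsAt g c d p) :
    HasPartialsAt (fun q => f q - g q) (a - c) (b - d) p :=
  (HasFDerivAt.sub hf hg).congr_fderiv (by ext <;> simp)

theorem neg (hf : HasPartialsAt f a b p) : HasPartialsAt (fun q => -f q) (-a) (-b) p :=
  (HasFDerivAt.neg hf).congr_fderiv (by ext <;> simp)

theorem mul (hf : HasPartialsAt f a b p) (hg : HasPartialsAt g c d p) :
    HasPartialsAt (fun q => f q * g q) (a * g p + f p * c) (b * g p + f p * d) p :=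
  (HasFDerivAt.mul hf hg).congr_fderiv (by ext <;> simp <;> ring)

theorem comp_hasDerivAt {φ : ℝ → ℝ} {k : ℝ} (hφ : HasDerivAt φ k (f p))
    (hf : HasPartialsAt f a b p) : HasPartialsAt (fun q => φ (f q)) (k * a) (k * b) p :=
  (hφ.comp_hasFDerivAt p hf).congr_fderiv (by ext <;> simp)

theorem exp (hf : HasPartialsAt f a b p) :
    HasPartialsAt (fun q => Real.exp (f q)) (Real.exp (f p) * a) (Real.exp (f p) * b) p :=
  hf.comp_hasDerivAt (Real.hasDerivAt_exp _)

theorem comp_prodMk {F : ℝ × ℝ → ℝ} {k l : ℝ} (hF : HasPartialsAt F k l (f p, g p))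
    (hf : HasPartialsAt f a b p) (hg : HasPartialsAt g c d p) :
    HasPartialsAt (fun q => F (f q, g q)) (k * a + l * c) (k * b + l * d) p :=
  (HasFDerivAt.comp (g := F) (f := fun q => (f q, g q)) p hF
    (HasFDerivAt.prodMk hf hg)).congr_fderiv (by ext <;> simp)

theorem hasDerivAt_fst {x t : ℝ} (h : HasPartialsAt f a b (x, t)) :
    HasDerivAt (fun y => f (y, t)) a x := by
  simpa [Function.comp_def] using HasFDerivAt.comp_hasDerivAt (f := fun y : ℝ => (y, t)) x h
    ((hasDerivAt_id x).prodMk (hasDerivAt_const x t))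

theorem hasDerivAt_snd {x t : ℝ} (h : HasPartialsAt f a b (x, t)) :
    HasDerivAt (fun y => f (x, y)) b t := by
  simpa [Function.comp_def] using HasFDerivAt.comp_hasDerivAt (f := fun y : ℝ => (x, y)) t h
    ((hasDerivAt_const t x).prodMk (hasDerivAt_id t))

end HasPartialsAt

namespace HasBddDerivs

variable {m : ℕ} {N : WithTop ℕ∞} {f : ℝ × ℝ → ℝ} {s : Set (ℝ × ℝ)}

theorem hasPartialsAt (h : HasBddDerivs m ∞ f s) {p : ℝ × ℝ} (hp : p ∈ s) :
    HasPartialsAt f (partialFst f p) (partialSnd f p) p :=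
  .of_differentiableAt ((h.contDiffAt p hp).differentiableAt (by simp))

protected theorem partialFst (h : HasBddDerivs m ∞ f s) (hm : m ≤ 1 := by simp) :
    BddSmooth (partialFst f) s :=
  (HasBddDerivs.fderiv (N := ∞) h hm).clm_comp (.apply ℝ ℝ ((1, 0) : ℝ × ℝ))

protected theorem partialSnd (h : HasBddDerivs m ∞ f s) (hm : m ≤ 1 := by simp) :
    BddSmooth (partialSnd f) s :=
  (HasBddDerivs.fderiv (N := ∞) h hm).clm_comp (.apply ℝ ℝ ((0, 1) : ℝ × ℝ))

theorem of_hasPartialsAt (hs : IsOpen s) {a b : ℝ × ℝ → ℝ}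
    (hf : ∀ p ∈ s, HasPartialsAt f (a p) (b p) p) (ha : HasBddDerivs 0 N a s)
    (hb : HasBddDerivs 0 N b s) (hN : N ≠ ω := by simp) : HasBddDerivs 1 (N + 1) f s := by
  refine of_hasFDerivAt hs hf ?_ hN
  exact (ha.clm_comp (.smulRight (.id ℝ ℝ) (ContinuousLinearMap.fst ℝ ℝ ℝ))).add
    (hb.clm_comp (.smulRight (.id ℝ ℝ) (ContinuousLinearMap.snd ℝ ℝ ℝ)))

theorem fst : HasBddDerivs 1 N (Prod.fst : ℝ × ℝ → ℝ) s := clm (.fst ℝ ℝ ℝ)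

theorem snd : HasBddDerivs 1 N (Prod.snd : ℝ × ℝ → ℝ) s := clm (.snd ℝ ℝ ℝ)

theorem exp_Iic (C : ℝ) : HasBddDerivs 0 N Real.exp (Iic C) where
  contDiffAt _ _ := Real.contDiff_exp.contDiffAt
  exists_bound n _ _ := by
    refine ⟨Real.exp C, fun x hx => ?_⟩
    rw [norm_iteratedFDeriv_eq_norm_iteratedDeriv, iteratedDeriv_eq_iterate, Real.iter_deriv_exp,
      Real.norm_eq_abs, Real.abs_exp]
    exact Real.exp_le_exp.2 hx

theorem exp_mul_fst (k : ℝ) {C : ℝ} (hC : ∀ p ∈ s, k * p.1 ≤ C) :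
    HasBddDerivs 0 N (fun p : ℝ × ℝ => Real.exp (k * p.1)) s :=
  (exp_Iic C).comp (fst.const_mul k) hC

end HasBddDerivs

end Partials

/-- The half-plane on which the first variable is greater than `a`. -/
def rightOf (a : ℝ) : Set (ℝ × ℝ) := {p | a < p.1}

theorem isOpen_rightOf (a : ℝ) : IsOpen (rightOf a) := isOpen_lt continuous_const continuous_fst

theorem mem_rightOf_sub_one (p : ℝ × ℝ) : p ∈ rightOf (p.1 - 1) := sub_one_lt p.1

section Inverse

/-- The linear map `(x, t) ↦ (a x + b t, t)`: the derivative of a change of the first variable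
which depends on the second variable as a parameter. -/
noncomputable def shearEquiv (a b : ℝ) (ha : a ≠ 0) : (ℝ × ℝ) ≃L[ℝ] ℝ × ℝ :=
  .equivOfInverse
    ((a • ContinuousLinearMap.fst ℝ ℝ ℝ + b • ContinuousLinearMap.snd ℝ ℝ ℝ).prod (.snd ℝ ℝ ℝ))
    ((a⁻¹ • ContinuousLinearMap.fst ℝ ℝ ℝ + (-(a⁻¹ * b)) • ContinuousLinearMap.snd ℝ ℝ ℝ).prod
      (.snd ℝ ℝ ℝ))
    (fun p => Prod.ext (by simp; field_simp; ring) rfl)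
    (fun p => Prod.ext (by simp; field_simp; ring) rfl)

theorem HasPartialsAt.of_leftInverse {f g : ℝ × ℝ → ℝ} {a b : ℝ} {p : ℝ × ℝ} (ha : a ≠ 0)
    (hf : HasPartialsAt f a b (g p, p.2)) (hg : ContinuousAt g p)
    (hfg : ∀ᶠ q in 𝓝 p, f (g q, q.2) = q.1) :
    HasPartialsAt g a⁻¹ (-(a⁻¹ * b)) p := by
  have hF : HasFDerivAt (fun q : ℝ × ℝ => (f q, q.2))
      (shearEquiv a b ha : ℝ × ℝ →L[ℝ] ℝ × ℝ) (g p, p.2) :=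
    HasFDerivAt.prodMk hf hasFDerivAt_snd
  have hG : HasFDerivAt (fun q : ℝ × ℝ => (g q, q.2))
      ((shearEquiv a b ha).symm : ℝ × ℝ →L[ℝ] ℝ × ℝ) p :=
    hF.of_local_left_inverse (hg.prodMk continuousAt_snd)
      (hfg.mono fun q hq => Prod.ext hq rfl)
  exact hG.fst

end Inverse

/-- An increasing change of the first variable, depending on the second one as a parameter, which
on every right half-plane differs from the identity by a function with bounded derivatives and has
derivative bounded below, and which tends to `-∞` at `-∞` uniformly in the parameter. -/
structure IsBddDiffeo (f : ℝ × ℝ → ℝ) : Prop where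
  bddSmooth_sub_fst : ∀ a, BddSmooth (fun p => f p - p.1) (rightOf a)
  exists_pos_le_partialFst : ∀ a, ∃ c > 0, ∀ p ∈ rightOf a, c ≤ partialFst f p
  exists_forall_fst_le : ∀ N, ∃ M, ∀ p : ℝ × ℝ, p.1 ≤ M → f p ≤ N

namespace IsBddDiffeo

variable {f g : ℝ × ℝ → ℝ}

theorem hasBddDerivs (h : IsBddDiffeo f) (a : ℝ) : HasBddDerivs 1 ∞ f (rightOf a) := by
  simpa using ((h.bddSmooth_sub_fst a).of_le zero_le_one le_rfl).add HasBddDerivs.fst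

theorem contDiff (h : IsBddDiffeo f) : ContDiff ℝ ∞ f :=
  contDiff_iff_contDiffAt.2 fun p => (h.hasBddDerivs _).contDiffAt p (mem_rightOf_sub_one p)

theorem hasPartialsAt (h : IsBddDiffeo f) (p : ℝ × ℝ) :
    HasPartialsAt f (partialFst f p) (partialSnd f p) p :=
  (h.hasBddDerivs _).hasPartialsAt (mem_rightOf_sub_one p)

theorem partialFst_pos (h : IsBddDiffeo f) (p : ℝ × ℝ) : 0 < partialFst f p :=
  let ⟨_, hc, hle⟩ := h.exists_pos_le_partialFst (p.1 - 1)
  hc.trans_le (hle p (mem_rightOf_sub_one p))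

theorem exists_forall_abs_sub_le (h : IsBddDiffeo f) (a : ℝ) :
    ∃ C, ∀ p ∈ rightOf a, |f p - p.1| ≤ C :=
  (h.bddSmooth_sub_fst a).exists_norm_le

theorem strictMono (h : IsBddDiffeo f) (t : ℝ) : StrictMono fun x => f (x, t) := by
  refine strictMono_of_deriv_pos fun x => ?_
  rw [(h.hasPartialsAt (x, t)).hasDerivAt_fst.deriv]
  exact h.partialFst_pos _

theorem tendsto_atTop (h : IsBddDiffeo f) (t : ℝ) : Tendsto (fun x => f (x, t)) atTop atTop := by
  obtain ⟨C, hC⟩ := h.exists_forall_abs_sub_le 0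
  refine tendsto_atTop_mono' atTop ?_ (tendsto_atTop_add_const_right atTop (-C) tendsto_id)
  filter_upwards [eventually_gt_atTop 0] with x hx
  linarith [(abs_le.1 (hC (x, t) hx)).1, id_eq x]

theorem tendsto_atBot (h : IsBddDiffeo f) (t : ℝ) : Tendsto (fun x => f (x, t)) atBot atBot :=
  Filter.tendsto_atBot.2 fun N => by
    obtain ⟨M, hM⟩ := h.exists_forall_fst_le N
    filter_upwards [eventually_le_atBot M] with x hx using hM (x, t) hx

theorem surjective (h : IsBddDiffeo f) (t : ℝ) : Function.Surjective fun x => f (x, t) :=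
  Continuous.surjective (h.contDiff.continuous.comp (by fun_prop)) (h.tendsto_atTop t)
    (h.tendsto_atBot t)

theorem exists_mapsTo_rightOf (h : IsBddDiffeo f) (a : ℝ) :
    ∃ b, MapsTo (fun p => (f p, p.2)) (rightOf a) (rightOf b) := by
  obtain ⟨C, hC⟩ := h.exists_forall_abs_sub_le a
  refine ⟨a - C, fun p hp => ?_⟩
  have := (abs_le.1 (hC p hp)).1
  simp only [rightOf, mem_ofPred_eq] at hp ⊢
  linarith

section LeftInverse

variable (h : IsBddDiffeo f) (hfg : ∀ p : ℝ × ℝ, f (g p, p.2) = p.1)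
include h hfg

theorem continuous_of_leftInverse : Continuous g := by
  refine continuous_iff_continuousAt.2 fun p => tendsto_order.2
    ⟨fun y hy => ?_, fun y hy => ?_⟩
  · have : f (y, p.2) < p.1 := (h.strictMono p.2 hy).trans_eq (hfg p)
    filter_upwards [(h.contDiff.continuous.comp (by fun_prop)).continuousAt.eventually_lt
      (f := fun q : ℝ × ℝ => f (y, q.2)) continuousAt_fst this] with q hq
    exact (h.strictMono q.2).lt_iff_lt.1 (hq.trans_eq (hfg q).symm)
  · have : p.1 < f (y, p.2) := (hfg p).symm.trans_lt (h.strictMono p.2 hy)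
    filter_upwards [ContinuousAt.eventually_lt (g := fun q : ℝ × ℝ => f (y, q.2))
      continuousAt_fst (h.contDiff.continuous.comp (by fun_prop)).continuousAt this] with q hq
    exact (h.strictMono q.2).lt_iff_lt.1 ((hfg q).trans_lt hq)

theorem hasPartialsAt_of_leftInverse (p : ℝ × ℝ) :
    HasPartialsAt g (partialFst f (g p, p.2))⁻¹
      (-((partialFst f (g p, p.2))⁻¹ * partialSnd f (g p, p.2))) p :=
  (h.hasPartialsAt _).of_leftInverse (h.partialFst_pos _).ne'
    (h.continuous_of_leftInverse hfg).continuousAt (Eventually.of_forall hfg)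

theorem exists_mapsTo_rightOf_of_leftInverse (a : ℝ) :
    ∃ b, MapsTo (fun p => (g p, p.2)) (rightOf a) (rightOf b) := by
  obtain ⟨b, hb⟩ := h.exists_forall_fst_le a
  refine ⟨b, fun p hp => show b < g p from lt_of_not_ge fun hle => ?_⟩
  exact (hb (g p, p.2) hle).not_gt ((hfg p).symm ▸ hp)

theorem hasBddDerivs_of_leftInverse (a : ℝ) : HasBddDerivs 1 ∞ g (rightOf a) := by
  obtain ⟨b, hb⟩ := h.exists_mapsTo_rightOf_of_leftInverse hfg a
  obtain ⟨c, hc, hle⟩ := h.exists_pos_le_partialFst b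
  have hfst : BddSmooth (fun p => (partialFst f p)⁻¹) (rightOf b) :=
    (h.hasBddDerivs b).partialFst.inv hc hle
  have hsnd : BddSmooth (fun p => -((partialFst f p)⁻¹ * partialSnd f p)) (rightOf b) :=
    (hfst.mul (h.hasBddDerivs b).partialSnd).neg
  refine HasBddDerivs.infty_of_nat fun n => ?_
  induction n with
  | zero =>
    exact .zero_of_continuousOn (isOpen_rightOf a) (h.continuous_of_leftInverse hfg).continuousOn
      (by simp)
  | succ n ih =>
    have hn : ((n : ℕ) : WithTop ℕ∞) ≤ ∞ := by exact_mod_cast le_top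
    exact .of_hasPartialsAt (isOpen_rightOf a) (fun p _ => h.hasPartialsAt_of_leftInverse hfg p)
      ((hfst.of_le le_rfl hn).comp (ih.prodMk .snd) hb)
      ((hsnd.of_le le_rfl hn).comp (ih.prodMk .snd) hb)

theorem of_leftInverse : IsBddDiffeo g where
  bddSmooth_sub_fst a := by
    obtain ⟨b, hb⟩ := h.exists_mapsTo_rightOf_of_leftInverse hfg a
    obtain ⟨C, hC⟩ := h.exists_forall_abs_sub_le b
    refine ((h.hasBddDerivs_of_leftInverse hfg a).sub .fst).of_exists_norm_le
      ⟨C, fun p hp => ?_⟩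
    simpa only [hfg, abs_sub_comm, Real.norm_eq_abs] using hC _ (hb hp)
  exists_pos_le_partialFst a := by
    obtain ⟨b, hb⟩ := h.exists_mapsTo_rightOf_of_leftInverse hfg a
    obtain ⟨C, hC⟩ := (h.hasBddDerivs b).partialFst.exists_norm_le
    refine ⟨(max C 1)⁻¹, by positivity, fun p hp => ?_⟩
    rw [(h.hasPartialsAt_of_leftInverse hfg p).partialFst_eq]
    exact inv_anti₀ (h.partialFst_pos _)
      (((le_abs_self _).trans (hC _ (hb hp))).trans (le_max_left _ _))
  exists_forall_fst_le N := by
    obtain ⟨C, hC⟩ := h.exists_forall_abs_sub_le (N - 1)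
    refine ⟨N - C, fun p hp => (h.strictMono p.2).le_iff_le.1 ?_⟩
    have := (abs_le.1 (hC (N, p.2) (mem_rightOf_sub_one (N, p.2)))).1
    simp only [hfg]
    linarith

end LeftInverse

theorem exists_inverse (h : IsBddDiffeo f) :
    ∃ g, IsBddDiffeo g ∧ (∀ p : ℝ × ℝ, f (g p, p.2) = p.1) ∧ ∀ p : ℝ × ℝ, g (f p, p.2) = p.1 := by
  choose g hg using fun p : ℝ × ℝ => h.surjective p.2 p.1
  exact ⟨g, h.of_leftInverse hg, hg, fun p => (h.strictMono p.2).injective (hg (f p, p.2))⟩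

theorem comp (hf : IsBddDiffeo f) (hg : IsBddDiffeo g) : IsBddDiffeo fun p => f (g p, p.2) where
  bddSmooth_sub_fst a := by
    obtain ⟨b, hb⟩ := hg.exists_mapsTo_rightOf a
    simpa using ((hf.bddSmooth_sub_fst b).comp ((hg.hasBddDerivs a).prodMk .snd) hb).add
      (hg.bddSmooth_sub_fst a)
  exists_pos_le_partialFst a := by
    obtain ⟨b, hb⟩ := hg.exists_mapsTo_rightOf a
    obtain ⟨c, hc, hf'⟩ := hf.exists_pos_le_partialFst b
    obtain ⟨d, hd, hg'⟩ := hg.exists_pos_le_partialFst a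
    refine ⟨c * d, by positivity, fun p hp => ?_⟩
    rw [((hf.hasPartialsAt (g p, p.2)).comp_prodMk (hg.hasPartialsAt p) .snd).partialFst_eq,
      mul_zero, add_zero]
    exact mul_le_mul (hf' _ (hb hp)) (hg' p hp) hd.le (hf.partialFst_pos _).le
  exists_forall_fst_le N := by
    obtain ⟨M, hM⟩ := hf.exists_forall_fst_le N
    obtain ⟨M', hM'⟩ := hg.exists_forall_fst_le M
    exact ⟨M', fun p hp => hM _ (hM' p hp)⟩

end IsBddDiffeo

section AffineAverage

/-- The average over `q ∈ (0, 1)` of the functions `(x, t) ↦ h (α q * x + β q, t)` against the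
weight `w`. -/
noncomputable def affineAvg (w α β : ℝ → ℝ) (h : ℝ × ℝ → ℝ) (p : ℝ × ℝ) : ℝ :=
  ∫ q in Ioo (0 : ℝ) 1, w q * h (α q * p.1 + β q, p.2)

/-- The conditions under which `affineAvg w α β` takes bounded functions on `W` to bounded functions
on `U`, and does not increase derivatives: the weights are bounded, and the affine maps
`x ↦ α q * x + β q` take `U` to `W` and do not expand. -/
structure IsBddAffineFamily (w α β : ℝ → ℝ) (U W : Set (ℝ × ℝ)) : Prop where
  exists_abs_weight_le : ∃ B, ∀ q ∈ Ioo (0 : ℝ) 1, |w q| ≤ B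
  abs_scale_le : ∀ q ∈ Ioo (0 : ℝ) 1, |α q| ≤ 1
  continuousOn_weight : ContinuousOn w (Ioo 0 1)
  continuousOn_scale : ContinuousOn α (Ioo 0 1)
  continuousOn_shift : ContinuousOn β (Ioo 0 1)
  mapsTo : ∀ q ∈ Ioo (0 : ℝ) 1, MapsTo (fun p => (α q * p.1 + β q, p.2)) U W

namespace IsBddAffineFamily

variable {w α β : ℝ → ℝ} {h : ℝ × ℝ → ℝ} {U W : Set (ℝ × ℝ)} {p : ℝ × ℝ}

theorem weight_mul_scale (hF : IsBddAffineFamily w α β U W) :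
    IsBddAffineFamily (fun q => w q * α q) α β U W where
  __ := hF
  exists_abs_weight_le := hF.exists_abs_weight_le.imp fun B hB q hq => by
    rw [abs_mul]
    exact (mul_le_of_le_one_right (abs_nonneg _) (hF.abs_scale_le q hq)).trans (hB q hq)
  continuousOn_weight := hF.continuousOn_weight.mul hF.continuousOn_scale

theorem exists_norm_integrand_le (hF : IsBddAffineFamily w α β U W)
    (hh : ∃ C, ∀ p ∈ W, ‖h p‖ ≤ C) :
    ∃ C, ∀ q ∈ Ioo (0 : ℝ) 1, ∀ p ∈ U, ‖w q * h (α q * p.1 + β q, p.2)‖ ≤ C := by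
  obtain ⟨B, hB⟩ := hF.exists_abs_weight_le
  obtain ⟨C, hC⟩ := hh
  refine ⟨B * C, fun q hq p hp => ?_⟩
  rw [norm_mul]
  exact mul_le_mul (hB q hq) (hC _ (hF.mapsTo q hq hp)) (norm_nonneg _)
    ((abs_nonneg _).trans (hB q hq))

theorem exists_norm_affineAvg_le (hF : IsBddAffineFamily w α β U W)
    (hh : ∃ C, ∀ p ∈ W, ‖h p‖ ≤ C) : ∃ C, ∀ p ∈ U, ‖affineAvg w α β h p‖ ≤ C := by
  obtain ⟨C, hC⟩ := hF.exists_norm_integrand_le hh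
  refine ⟨C, fun p hp => ?_⟩
  simpa [affineAvg] using norm_setIntegral_le_of_norm_le_const (μ := volume) (s := Ioo (0 : ℝ) 1)
    (by simp) fun q hq => hC q hq p hp

theorem aestronglyMeasurable_integrand (hF : IsBddAffineFamily w α β U W)
    (hh : ContinuousOn h W) (hp : p ∈ U) :
    AEStronglyMeasurable (fun q => w q * h (α q * p.1 + β q, p.2))
      (volume.restrict (Ioo (0 : ℝ) 1)) :=
  (hF.continuousOn_weight.mul (hh.comp
    (((hF.continuousOn_scale.mul continuousOn_const).add hF.continuousOn_shift).prodMk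
      continuousOn_const) fun q hq => hF.mapsTo q hq hp)).aestronglyMeasurable measurableSet_Ioo

theorem integrableOn_integrand (hF : IsBddAffineFamily w α β U W) (hh : BddSmooth h W)
    (hp : p ∈ U) : IntegrableOn (fun q => w q * h (α q * p.1 + β q, p.2)) (Ioo (0 : ℝ) 1) := by
  obtain ⟨C, hC⟩ := hF.exists_norm_integrand_le hh.exists_norm_le
  exact Integrable.of_bound (hF.aestronglyMeasurable_integrand hh.contDiffOn.continuousOn hp) C
    (ae_restrict_of_forall_mem measurableSet_Ioo fun q hq => hC q hq p hp)

theorem hasPartialsAt_integrand (hF : IsBddAffineFamily w α β U W) (hh : BddSmooth h W)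
    {q : ℝ} (hq : q ∈ Ioo (0 : ℝ) 1) (hp : p ∈ U) :
    HasPartialsAt (fun p => w q * h (α q * p.1 + β q, p.2))
      (w q * α q * partialFst h (α q * p.1 + β q, p.2))
      (w q * partialSnd h (α q * p.1 + β q, p.2)) p := by
  have hshift : HasPartialsAt (fun p : ℝ × ℝ => α q * p.1 + β q) (α q) 0 p :=
    (((HasPartialsAt.const (α q)).mul .fst).add (.const (β q))).congr_partials (by simp) (by simp)
  exact ((HasPartialsAt.const (w q)).mul ((hh.hasPartialsAt (hF.mapsTo q hq hp)).comp_prodMk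
    hshift .snd)).congr_partials (by ring) (by ring)

theorem hasPartialsAt_affineAvg (hF : IsBddAffineFamily w α β U W) (hU : IsOpen U)
    (hh : BddSmooth h W) (hp : p ∈ U) :
    HasPartialsAt (affineAvg w α β h) (affineAvg (fun q => w q * α q) α β (partialFst h) p)
      (affineAvg w α β (partialSnd h) p) p := by
  obtain ⟨C, hC⟩ := hF.weight_mul_scale.exists_norm_integrand_le hh.partialFst.exists_norm_le
  obtain ⟨D, hD⟩ := hF.exists_norm_integrand_le hh.partialSnd.exists_norm_le
  have hfst := (hF.weight_mul_scale.integrableOn_integrand hh.partialFst hp).smul_const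
    (ContinuousLinearMap.fst ℝ ℝ ℝ)
  have hsnd := (hF.integrableOn_integrand hh.partialSnd hp).smul_const
    (ContinuousLinearMap.snd ℝ ℝ ℝ)
  refine (hasFDerivAt_integral_of_dominated_of_fderiv_le (μ := volume.restrict (Ioo 0 1))
    (F := fun (p : ℝ × ℝ) q => w q * h (α q * p.1 + β q, p.2)) (hU.mem_nhds hp)
    (bound := fun _ => C * ‖ContinuousLinearMap.fst ℝ ℝ ℝ‖ + D * ‖ContinuousLinearMap.snd ℝ ℝ ℝ‖)
    ?_ (hF.integrableOn_integrand hh hp) (hfst.add hsnd).aestronglyMeasurable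
    (ae_restrict_of_forall_mem measurableSet_Ioo fun q hq x hx => ?_) (integrable_const _)
    (ae_restrict_of_forall_mem measurableSet_Ioo fun q hq x hx =>
      hF.hasPartialsAt_integrand hh hq hx)).congr_fderiv ?_
  · filter_upwards [hU.mem_nhds hp] with x hx
    exact hF.aestronglyMeasurable_integrand hh.contDiffOn.continuousOn hx
  · refine (norm_add_le _ _).trans ?_
    simp only [norm_smul]
    gcongr
    exacts [hC q hq x hx, hD q hq x hx]
  · rw [integral_add hfst hsnd, integral_smul_const, integral_smul_const]
    rfl

theorem bddSmooth_affineAvg (hF : IsBddAffineFamily w α β U W) (hU : IsOpen U)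
    (hh : BddSmooth h W) : BddSmooth (affineAvg w α β h) U := by
  refine HasBddDerivs.infty_of_nat fun n => ?_
  induction n generalizing w h with
  | zero =>
    exact .zero_of_continuousOn hU (fun p hp => (hF.hasPartialsAt_affineAvg hU hh
      hp).differentiableAt.continuousAt.continuousWithinAt)
      fun _ => hF.exists_norm_affineAvg_le hh.exists_norm_le
  | succ n ih =>
    exact (HasBddDerivs.of_hasPartialsAt hU (fun p hp => hF.hasPartialsAt_affineAvg hU hh hp)
      (ih hF.weight_mul_scale hh.partialFst) (ih hF hh.partialSnd)).of_exists_norm_le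
      (hF.exists_norm_affineAvg_le hh.exists_norm_le)

end IsBddAffineFamily

end AffineAverage

/-- The vertical strip on which the first variable is less than `M` in absolute value. -/
def strip (M : ℝ) : Set (ℝ × ℝ) := {p | |p.1| < M}

theorem isOpen_strip (M : ℝ) : IsOpen (strip M) :=
  isOpen_lt continuous_fst.abs continuous_const

theorem mem_strip_self (p : ℝ × ℝ) : p ∈ strip (|p.1| + 1) := lt_add_one |p.1|

theorem strip_subset_rightOf (M : ℝ) : strip M ⊆ rightOf (-M) := fun p hp =>
  show -M < p.1 from (abs_lt.1 hp).1

theorem HasBddDerivs.fst_strip (M : ℝ) : BddSmooth (Prod.fst : ℝ × ℝ → ℝ) (strip M) :=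
  fst.of_exists_norm_le ⟨M, fun _ hp => le_of_lt hp⟩

section Langer

/-- The integral of `√q * h (q * x, t)` over `q ∈ (0, 1)`. For `x > 0` this is
`x ^ (-3 / 2) * ∫ y in 0..x, √y * h (y, t)`. -/
noncomputable def langerAvg (h : ℝ × ℝ → ℝ) : ℝ × ℝ → ℝ :=
  affineAvg (fun q => √q) (fun q => q) (fun _ => 0) h

/-- The Langer variable of density `h`: the solution of `S * S_x ^ 2 = 4 / 9 * x * h ^ 2` which is
smooth through the turning point `x = 0`. -/
noncomputable def langer (h : ℝ × ℝ → ℝ) (p : ℝ × ℝ) : ℝ := p.1 * langerAvg h p ^ (2 / 3 : ℝ)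

theorem isBddAffineFamily_sqrt (M : ℝ) :
    IsBddAffineFamily (fun q => √q) (fun q => q) (fun _ => 0) (strip M) (strip M) where
  exists_abs_weight_le := ⟨1, fun q hq => by
    rw [abs_of_nonneg (Real.sqrt_nonneg q)]
    exact Real.sqrt_le_one.2 hq.2.le⟩
  abs_scale_le q hq := (abs_of_pos hq.1).trans_le hq.2.le
  continuousOn_weight := by fun_prop
  continuousOn_scale := continuousOn_id
  continuousOn_shift := continuousOn_const
  mapsTo q hq p hp := by
    simp only [strip, mem_ofPred_eq, add_zero, abs_mul, abs_of_pos hq.1] at hp ⊢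
    exact (mul_le_of_le_one_left (abs_nonneg _) hq.2.le).trans_lt hp

variable {h : ℝ × ℝ → ℝ} {c : ℝ}

theorem bddSmooth_langerAvg (hh : ∀ M, BddSmooth h (strip M)) (M : ℝ) :
    BddSmooth (langerAvg h) (strip M) :=
  (isBddAffineFamily_sqrt M).bddSmooth_affineAvg (isOpen_strip M) (hh M)

theorem hasDerivAt_mul_sqrt {q : ℝ} (hq : 0 < q) :
    HasDerivAt (fun q => q * √q) (3 / 2 * √q) q := by
  refine ((hasDerivAt_id' q).mul (Real.hasDerivAt_sqrt hq.ne')).congr_deriv ?_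
  field_simp
  linarith [Real.sq_sqrt hq.le]

theorem three_halves_mul_langerAvg_add (hh : ∀ M, BddSmooth h (strip M)) (p : ℝ × ℝ) :
    3 / 2 * langerAvg h p + p.1 * partialFst (langerAvg h) p = h p := by
  have hF := isBddAffineFamily_sqrt (|p.1| + 1)
  have hsm := hh (|p.1| + 1)
  have hp := mem_strip_self p
  have hmem : ∀ q ∈ Icc (0 : ℝ) 1, (q * p.1 + 0, p.2) ∈ strip (|p.1| + 1) := fun q hq => by
    simp only [strip, mem_ofPred_eq, add_zero, abs_mul, abs_of_nonneg hq.1]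
    exact (mul_le_of_le_one_left (abs_nonneg _) hq.2).trans_lt hp
  have hint := (hF.integrableOn_integrand hsm hp).const_mul (3 / 2)
  have hint' := (hF.weight_mul_scale.integrableOn_integrand hsm.partialFst hp).const_mul p.1
  have hcont : ContinuousOn (fun q : ℝ => q * √q * h (q * p.1 + 0, p.2)) (Icc 0 1) :=
    .mul (by fun_prop) (hsm.contDiffOn.continuousOn.comp (by fun_prop) hmem)
  have hderiv : ∀ q ∈ Ioo (0 : ℝ) 1, HasDerivAt (fun q : ℝ => q * √q * h (q * p.1 + 0, p.2))
      (3 / 2 * (√q * h (q * p.1 + 0, p.2)) +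
        p.1 * (√q * q * partialFst h (q * p.1 + 0, p.2))) q := fun q hq => by
    have hlin : HasDerivAt (fun q : ℝ => q * p.1 + 0) p.1 q := by
      simpa using (hasDerivAt_id q).mul_const p.1
    refine ((hasDerivAt_mul_sqrt hq.1).mul (HasDerivAt.comp (h₂ := fun y => h (y, p.2)) q
      (hsm.hasPartialsAt (hmem q (Ioo_subset_Icc_self hq))).hasDerivAt_fst hlin)).congr_deriv ?_
    simp only [Function.comp_apply]
    ring
  have hFTC := intervalIntegral.integral_eq_sub_of_hasDerivAt_of_le zero_le_one hcont hderiv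
    ((intervalIntegrable_iff_integrableOn_Ioo_of_le zero_le_one).2 (hint.add hint'))
  rw [intervalIntegral.integral_of_le zero_le_one, integral_Ioc_eq_integral_Ioo,
    integral_add hint hint', integral_const_mul, integral_const_mul] at hFTC
  rw [show partialFst (langerAvg h) p = _ from
    (hF.hasPartialsAt_affineAvg (isOpen_strip _) hsm hp).partialFst_eq]
  simpa [langerAvg, affineAvg] using hFTC

section LowerBounds

variable (hh : ∀ M, BddSmooth h (strip M)) (hc : 0 < c) (hle : ∀ p, c / √(1 + |p.1|) ≤ h p)
include hh hc hle

theorem div_sqrt_le_langerAvg (p : ℝ × ℝ) : 2 / 3 * (c / √(1 + |p.1|)) ≤ langerAvg h p := by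
  have hconst : ∫ q in Ioo (0 : ℝ) 1, √q * (c / √(1 + |p.1|)) = 2 / 3 * (c / √(1 + |p.1|)) := by
    simp only [Real.sqrt_eq_rpow]
    rw [← integral_Ioc_eq_integral_Ioo, ← intervalIntegral.integral_of_le zero_le_one,
      intervalIntegral.integral_mul_const, integral_rpow (by norm_num)]
    norm_num
  rw [← hconst]
  refine setIntegral_mono_on ((Continuous.integrableOn_Icc (by fun_prop)).mono_set
    Ioo_subset_Icc_self) ((isBddAffineFamily_sqrt _).integrableOn_integrand (hh _)
      (mem_strip_self p)) measurableSet_Ioo fun q hq => ?_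
  refine mul_le_mul_of_nonneg_left (le_trans ?_ (hle _)) (Real.sqrt_nonneg q)
  have : |q * p.1 + 0| ≤ |p.1| := by
    rw [add_zero, abs_mul, abs_of_pos hq.1]
    exact mul_le_of_le_one_left (abs_nonneg _) hq.2.le
  dsimp only
  gcongr

theorem langerAvg_pos (p : ℝ × ℝ) : 0 < langerAvg h p :=
  lt_of_lt_of_le (by positivity) (div_sqrt_le_langerAvg hh hc hle p)

theorem exists_pos_le_langerAvg (M : ℝ) : ∃ k > 0, ∀ p ∈ strip M, k ≤ langerAvg h p := by
  refine ⟨2 / 3 * (c / √(1 + |M|)), by positivity, fun p hp =>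
    le_trans ?_ (div_sqrt_le_langerAvg hh hc hle p)⟩
  have : |p.1| ≤ |M| := (le_of_lt hp).trans (le_abs_self M)
  gcongr

theorem bddSmooth_langer (M : ℝ) : BddSmooth (langer h) (strip M) := by
  obtain ⟨k, hk, hle⟩ := exists_pos_le_langerAvg hh hc hle M
  exact (HasBddDerivs.fst_strip M).mul ((bddSmooth_langerAvg hh M).rpow (2 / 3) hk hle)

theorem partialFst_langer (p : ℝ × ℝ) :
    partialFst (langer h) p = 2 / 3 * langerAvg h p ^ (-1 / 3 : ℝ) * h p := by
  have hA := (bddSmooth_langerAvg hh _).hasPartialsAt (mem_strip_self p)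
  have hpos := langerAvg_pos hh hc hle p
  rw [show partialFst (langer h) p = _ from (HasPartialsAt.fst.mul (hA.comp_hasDerivAt
    (Real.hasDerivAt_rpow_const (p := 2 / 3) (Or.inl hpos.ne')))).partialFst_eq,
    ← three_halves_mul_langerAvg_add hh p, show (2 / 3 - 1 : ℝ) = -1 / 3 by norm_num]
  have hpow : langerAvg h p ^ (2 / 3 : ℝ) = langerAvg h p ^ (-1 / 3 : ℝ) * langerAvg h p := by
    rw [← Real.rpow_add_one hpos.ne']
    norm_num
  rw [hpow]
  ring

theorem langer_mul_sq_partialFst (p : ℝ × ℝ) :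
    langer h p * partialFst (langer h) p ^ 2 = 4 / 9 * p.1 * h p ^ 2 := by
  have hpos := langerAvg_pos hh hc hle p
  have hpow : langerAvg h p ^ (2 / 3 : ℝ) * (langerAvg h p ^ (-1 / 3 : ℝ)) ^ 2 = 1 := by
    rw [← Real.rpow_natCast (langerAvg h p ^ (-1 / 3 : ℝ)), ← Real.rpow_mul hpos.le,
      ← Real.rpow_add hpos]
    norm_num
  rw [partialFst_langer hh hc hle, langer]
  linear_combination (4 / 9 * p.1 * h p ^ 2) * hpow

theorem exists_pos_le_partialFst_langer (M : ℝ) :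
    ∃ k > 0, ∀ p ∈ strip M, k ≤ partialFst (langer h) p := by
  obtain ⟨C, hC⟩ := (bddSmooth_langerAvg hh M).exists_norm_le
  refine ⟨2 / 3 * max C 1 ^ (-1 / 3 : ℝ) * (c / √(1 + |M|)), by positivity, fun p hp => ?_⟩
  have hpos := langerAvg_pos hh hc hle p
  have hA : langerAvg h p ≤ max C 1 := ((le_abs_self _).trans (hC p hp)).trans (le_max_left _ _)
  have hrpow := Real.rpow_le_rpow_of_nonpos hpos hA
    (by norm_num : (-1 / 3 : ℝ) ≤ 0)
  have hh' : c / √(1 + |M|) ≤ h p := le_trans (by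
    have : |p.1| ≤ |M| := (le_of_lt hp).trans (le_abs_self M)
    gcongr) (hle p)
  rw [partialFst_langer hh hc hle]
  gcongr

theorem mul_neg_fst_le_neg_langer_pow_three {p : ℝ × ℝ} (hp : p.1 ≤ -1) :
    2 / 9 * c ^ 2 * -p.1 ≤ (-langer h p) ^ 3 := by
  have hpos := langerAvg_pos hh hc hle p
  have hpow : (langerAvg h p ^ (2 / 3 : ℝ)) ^ 3 = langerAvg h p ^ 2 := by
    rw [← Real.rpow_natCast, ← Real.rpow_mul hpos.le, ← Real.rpow_natCast]
    norm_num
  have habs : |p.1| = -p.1 := abs_of_neg (by linarith)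
  have hsq : 4 / 9 * (c ^ 2 / (1 + -p.1)) ≤ langerAvg h p ^ 2 := by
    have := pow_le_pow_left₀ (by positivity) (div_sqrt_le_langerAvg hh hc hle p) 2
    rw [mul_pow, div_pow c, Real.sq_sqrt (by positivity), habs] at this
    linarith
  have hnum : 2 / 9 * c ^ 2 * -p.1 ≤ (-p.1) ^ 3 * (4 / 9 * (c ^ 2 / (1 + -p.1))) := by
    have : 0 < 1 + -p.1 := by linarith
    rw [mul_div_assoc', mul_div_assoc', le_div_iff₀ this]
    have hcube : -p.1 * (1 + -p.1) ≤ 2 * (-p.1) ^ 3 := by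
      nlinarith [mul_nonneg_of_nonpos_of_nonpos (a := p.1) (b := p.1 + 1) (by linarith)
        (by linarith), mul_nonneg (sq_nonneg p.1) (by linarith : 0 ≤ -p.1 - 1)]
    nlinarith [mul_le_mul_of_nonneg_left hcube (sq_nonneg c)]
  calc 2 / 9 * c ^ 2 * -p.1 ≤ (-p.1) ^ 3 * langerAvg h p ^ 2 :=
        hnum.trans (mul_le_mul_of_nonneg_left hsq (pow_nonneg (by linarith) 3))
    _ = (-langer h p) ^ 3 := by rw [langer, ← hpow]; ring

theorem exists_forall_langer_le (N : ℝ) : ∃ M, ∀ p : ℝ × ℝ, p.1 ≤ M → langer h p ≤ N := by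
  have hk : 0 < 2 / 9 * c ^ 2 := by positivity
  refine ⟨min (-1) (-(|N| ^ 3 / (2 / 9 * c ^ 2))), fun p hp => ?_⟩
  have hN : |N| ^ 3 ≤ 2 / 9 * c ^ 2 * -p.1 :=
    (div_le_iff₀' hk).1 (le_neg_of_le_neg (hp.trans (min_le_right _ _)))
  have hcube := hN.trans
    (mul_neg_fst_le_neg_langer_pow_three hh hc hle (hp.trans (min_le_left _ _)))
  have := (Odd.strictMono_pow (R := ℝ) (n := 3) (by decide)).le_iff_le.1 hcube
  linarith [neg_abs_le N]

end LowerBounds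

end Langer

section ExpQuot

theorem analyticAt_dslope {𝕜 E : Type*} [NontriviallyNormedField 𝕜] [NormedAddCommGroup E]
    [NormedSpace 𝕜 E] {f : 𝕜 → E} {a b : 𝕜} (ha : AnalyticAt 𝕜 f a) (hb : AnalyticAt 𝕜 f b) :
    AnalyticAt 𝕜 (dslope f a) b := by
  rcases eq_or_ne b a with rfl | hne
  · obtain ⟨q, hq⟩ := hb
    exact hq.has_fpower_series_dslope_fslope.analyticAt
  · refine AnalyticAt.congr ?_ (dslope_eventuallyEq_slope_of_ne f hne).symm
    exact ((analyticAt_id.sub analyticAt_const).inv (sub_ne_zero.2 hne)).smul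
      (hb.sub analyticAt_const)

/-- The function `(exp (2 * x) - 1) / x`, extended analytically through `x = 0`. -/
noncomputable def expQuot : ℝ → ℝ := dslope (fun x => Real.exp (2 * x)) 0

theorem contDiff_expQuot {n : WithTop ℕ∞} : ContDiff ℝ n expQuot :=
  contDiff_iff_contDiffAt.2 fun _ => (analyticAt_dslope (by fun_prop) (by fun_prop)).contDiffAt

theorem mul_expQuot (x : ℝ) : x * expQuot x = Real.exp (2 * x) - 1 := by
  simpa [expQuot] using sub_smul_dslope (fun x : ℝ => Real.exp (2 * x)) 0 x

theorem expQuot_zero : expQuot 0 = 2 := by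
  rw [expQuot, dslope_same]
  simpa using ((hasDerivAt_id (0 : ℝ)).const_mul 2).exp.deriv

theorem inv_one_add_abs_le_expQuot (x : ℝ) : (1 + |x|)⁻¹ ≤ expQuot x := by
  have hexp := Real.add_one_le_exp (2 * x)
  rcases lt_trichotomy x 0 with hx | rfl | hx
  · have hinv : Real.exp (2 * x) * (1 - 2 * x) ≤ 1 := by
      have := Real.add_one_le_exp (-(2 * x))
      calc Real.exp (2 * x) * (1 - 2 * x) ≤ Real.exp (2 * x) * Real.exp (-(2 * x)) := by
            gcongr; linarith
        _ = 1 := by rw [← Real.exp_add, add_neg_cancel, Real.exp_zero]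
    rw [← mul_le_mul_left_of_neg hx, mul_expQuot, abs_of_neg hx, ← div_eq_mul_inv,
      le_div_iff₀ (by linarith)]
    nlinarith [Real.exp_pos (2 * x)]
  · simp [expQuot_zero]
  · have hone : (1 + |x|)⁻¹ ≤ 1 := inv_le_one_of_one_le₀ (by simp)
    refine hone.trans (le_of_mul_le_mul_left ?_ hx)
    linarith [mul_expQuot x]

end ExpQuot

section LangerDensity

variable {γ : ℝ × ℝ → ℝ}

theorem isBddDiffeo_fst_sub (hγ : BddSmooth γ univ) (hγ' : ∀ p, |partialFst γ p| ≤ 1 / 2) :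
    IsBddDiffeo (fun p => p.1 - γ p) where
  bddSmooth_sub_fst a := by simpa using (hγ.mono (subset_univ (rightOf a))).neg
  exists_pos_le_partialFst a := ⟨1 / 2, by norm_num, fun p _ => by
    rw [(HasPartialsAt.fst.sub (hγ.hasPartialsAt (mem_univ p))).partialFst_eq]
    linarith [(abs_le.1 (hγ' p)).2]⟩
  exists_forall_fst_le N := by
    obtain ⟨C, hC⟩ := hγ.exists_norm_le
    refine ⟨N - C, fun p hp => ?_⟩
    linarith [(abs_le.1 (hC p (mem_univ p))).1]

/-- In the coordinate `x = u - γ`, the equation `S * S_u ^ 2 = 4 / 9 * (e^{2u} - e^{2γ})` becomes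
`S * S_x ^ 2 = 4 / 9 * (e^{2x} - 1) * φ ^ 2`, where `φ = e^γ * u_x`. This is that factor. -/
def IsLangerFactor (γ φ : ℝ × ℝ → ℝ) : Prop :=
  ∀ p : ℝ × ℝ, φ (p.1 - γ p, p.2) * (1 - partialFst γ p) = Real.exp (γ p)

theorem exists_isLangerFactor (hγ : BddSmooth γ univ) (hγ' : ∀ p, |partialFst γ p| ≤ 1 / 2) :
    ∃ φ, IsLangerFactor γ φ ∧ (∀ M, BddSmooth φ (strip M)) ∧ ∃ c > 0, ∀ p, c ≤ φ p := by
  have hx := isBddDiffeo_fst_sub hγ hγ'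
  obtain ⟨u, hu, hxu, hux⟩ := hx.exists_inverse
  obtain ⟨C, hC⟩ := hγ.exists_norm_le
  have hderiv : ∀ p, partialFst u p = (1 - partialFst γ (u p, p.2))⁻¹ := fun p => by
    rw [(hx.hasPartialsAt_of_leftInverse hxu p).partialFst_eq,
      (HasPartialsAt.fst.sub (hγ.hasPartialsAt (mem_univ _))).partialFst_eq]
  refine ⟨fun p => Real.exp (u p - p.1) * partialFst u p, fun p => ?_, fun M => ?_,
    Real.exp (-C) * (3 / 2)⁻¹, by positivity, fun p => ?_⟩
  · have hne : 1 - partialFst γ p ≠ 0 := by linarith [(abs_le.1 (hγ' p)).2]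
    have hinv : u (p.1 - γ p, p.2) = p.1 := hux p
    dsimp only
    rw [hderiv, hinv, mul_assoc, Prod.mk.eta, inv_mul_cancel₀ hne]
    simp
  · exact ((hu.bddSmooth_sub_fst (-M)).exp.mul (hu.hasBddDerivs (-M)).partialFst).mono
      (strip_subset_rightOf M)
  · have hbound := abs_le.1 (hC (u p, p.2) (mem_univ _))
    have hbound' := abs_le.1 (hγ' (u p, p.2))
    have hexp : Real.exp (-C) ≤ Real.exp (u p - p.1) :=
      Real.exp_le_exp.2 (by linarith [hxu p])
    have hinv : (3 / 2 : ℝ)⁻¹ ≤ partialFst u p := by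
      rw [hderiv]
      exact inv_anti₀ (by linarith) (by linarith)
    exact mul_le_mul hexp hinv (by norm_num) (Real.exp_pos _).le

/-- The density of the Langer variable in the coordinate `x = u - γ`; its square is
`(e^{2x} - 1) / x * φ ^ 2`. -/
noncomputable def langerDensity (φ : ℝ × ℝ → ℝ) (p : ℝ × ℝ) : ℝ := √(expQuot p.1) * φ p

variable {φ : ℝ × ℝ → ℝ}

theorem bddSmooth_langerDensity (hφ : ∀ M, BddSmooth φ (strip M)) (M : ℝ) :
    BddSmooth (langerDensity φ) (strip M) := by
  refine HasBddDerivs.mul (((HasBddDerivs.fst_strip M).comp_contDiff contDiff_expQuot).sqrt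
    (c := (1 + |M|)⁻¹) (by positivity) fun p hp => ?_) (hφ M)
  have : |p.1| ≤ |M| := (le_of_lt hp).trans (le_abs_self M)
  exact (by gcongr : (1 + |M|)⁻¹ ≤ (1 + |p.1|)⁻¹).trans (inv_one_add_abs_le_expQuot p.1)

theorem div_sqrt_le_langerDensity {c : ℝ} (hc : 0 < c) (hφ : ∀ p, c ≤ φ p) (p : ℝ × ℝ) :
    c / √(1 + |p.1|) ≤ langerDensity φ p := by
  rw [div_eq_inv_mul, ← Real.sqrt_inv]
  exact mul_le_mul (Real.sqrt_le_sqrt (inv_one_add_abs_le_expQuot p.1)) (hφ p) hc.le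
    (Real.sqrt_nonneg _)

theorem fst_mul_sq_langerDensity (p : ℝ × ℝ) :
    p.1 * langerDensity φ p ^ 2 = (Real.exp (2 * p.1) - 1) * φ p ^ 2 := by
  have hpos : 0 ≤ expQuot p.1 := le_trans (by positivity) (inv_one_add_abs_le_expQuot p.1)
  rw [langerDensity, mul_pow, Real.sq_sqrt hpos, ← mul_assoc, mul_expQuot]

end LangerDensity

/-- `S` is a Langer variable for the symbol `e^{2u} - e^{2γ}`, whose turning points are the
solutions of `u = γ`: it is smooth through the turning points and solves
`S * S_u ^ 2 = 4 / 9 * (e^{2u} - e^{2γ})` there and elsewhere, with estimates on vertical strips. -/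
structure IsLangerVar (γ S : ℝ × ℝ → ℝ) : Prop where
  bddSmooth : ∀ M, BddSmooth S (strip M)
  exists_pos_le_partialFst : ∀ M, ∃ k > 0, ∀ p ∈ strip M, k ≤ partialFst S p
  exists_forall_fst_le : ∀ N, ∃ M, ∀ p : ℝ × ℝ, p.1 ≤ M → S p ≤ N
  eq_zero : ∀ p, p.1 = γ p → S p = 0
  mul_sq_partialFst : ∀ p, S p * partialFst S p ^ 2 =
    4 / 9 * (1 - Real.exp (-2 * (p.1 - γ p))) * Real.exp (2 * p.1)
  exists_pos_le : ∀ M, ∃ k > 0, ∀ p ∈ strip M, 1 ≤ p.1 - γ p → k ≤ S p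

section Existence

variable {γ h : ℝ × ℝ → ℝ}

theorem mapsTo_strip_fst_sub {C : ℝ} (hγ : ∀ p, |γ p| ≤ C) (M : ℝ) :
    MapsTo (fun p : ℝ × ℝ => (p.1 - γ p, p.2)) (strip M) (strip (M + C)) := fun p hp =>
  ((abs_sub _ _).trans_lt (add_lt_add_of_lt_of_le hp (hγ p)) : |p.1 - γ p| < M + C)

variable {c : ℝ} (hh : ∀ M, BddSmooth h (strip M)) (hc : 0 < c)
  (hle : ∀ p, c / √(1 + |p.1|) ≤ h p)
include hh hc hle

theorem isLangerVar_langer (hγ : BddSmooth γ univ) (hγ' : ∀ p, |partialFst γ p| ≤ 1 / 2)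
    (hode : ∀ p : ℝ × ℝ, (p.1 - γ p) * (h (p.1 - γ p, p.2) * (1 - partialFst γ p)) ^ 2 =
      Real.exp (2 * p.1) - Real.exp (2 * γ p)) :
    IsLangerVar γ fun p => langer h (p.1 - γ p, p.2) := by
  obtain ⟨C, hC⟩ := hγ.exists_norm_le
  have hmaps := mapsTo_strip_fst_sub (γ := γ) (C := C) fun p => hC p (mem_univ p)
  have hfst : ∀ p : ℝ × ℝ, partialFst (fun p => langer h (p.1 - γ p, p.2)) p =
      partialFst (langer h) (p.1 - γ p, p.2) * (1 - partialFst γ p) := fun p => by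
    rw [(((bddSmooth_langer hh hc hle _).hasPartialsAt (mem_strip_self _)).comp_prodMk
      (HasPartialsAt.fst.sub (hγ.hasPartialsAt (mem_univ p))) .snd).partialFst_eq]
    ring
  refine ⟨fun M => ?_, fun M => ?_, fun N => ?_, fun p hp => ?_, fun p => ?_, fun M => ?_⟩
  · exact (bddSmooth_langer hh hc hle _).comp ((HasBddDerivs.fst.sub
      ((hγ.mono (subset_univ _)).of_le zero_le_one le_rfl)).prodMk .snd) (hmaps M)
  · obtain ⟨k, hk, hkle⟩ := exists_pos_le_partialFst_langer hh hc hle (M + C)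
    refine ⟨k * (1 / 2), by positivity, fun p hp => ?_⟩
    rw [hfst]
    exact mul_le_mul (hkle _ (hmaps M hp)) (by linarith [(abs_le.1 (hγ' p)).2]) (by norm_num)
      (hk.le.trans (hkle _ (hmaps M hp)))
  · obtain ⟨M, hM⟩ := exists_forall_langer_le hh hc hle N
    exact ⟨M - C, fun p hp => hM _ (by linarith [(abs_le.1 (hC p (mem_univ p))).1])⟩
  · simp [langer, hp]
  · rw [hfst, mul_pow, ← mul_assoc, langer_mul_sq_partialFst hh hc hle]
    have hexp : Real.exp (-2 * (p.1 - γ p)) * Real.exp (2 * p.1) = Real.exp (2 * γ p) := by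
      rw [← Real.exp_add]
      ring_nf
    linear_combination 4 / 9 * hode p + 4 / 9 * hexp
  · obtain ⟨k, hk, hkle⟩ := exists_pos_le_langerAvg hh hc hle (M + C)
    refine ⟨k ^ (2 / 3 : ℝ), by positivity, fun p hp hone => ?_⟩
    have hpow := Real.rpow_le_rpow hk.le (hkle _ (hmaps M hp)) (by norm_num : (0 : ℝ) ≤ 2 / 3)
    exact hpow.trans (le_mul_of_one_le_left
      (Real.rpow_nonneg (langerAvg_pos hh hc hle _).le _) hone)

omit hh hc hle in
theorem exists_isLangerVar (hγ : BddSmooth γ univ) (hγ' : ∀ p, |partialFst γ p| ≤ 1 / 2) :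
    ∃ S, IsLangerVar γ S := by
  obtain ⟨φ, hφγ, hφ, c, hc, hle⟩ := exists_isLangerFactor hγ hγ'
  refine ⟨_, isLangerVar_langer (bddSmooth_langerDensity hφ) hc (div_sqrt_le_langerDensity hc hle)
    hγ hγ' fun p => ?_⟩
  have hexp : Real.exp (2 * (p.1 - γ p)) * Real.exp (γ p) ^ 2 = Real.exp (2 * p.1) := by
    rw [← Real.exp_nat_mul, ← Real.exp_add]
    ring_nf
  have hsq := fst_mul_sq_langerDensity (φ := φ) (p.1 - γ p, p.2)
  rw [mul_pow, ← mul_assoc, hsq, mul_assoc, ← mul_pow, hφγ, sub_mul, hexp,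
    one_mul, ← Real.exp_nat_mul, Nat.cast_ofNat]

end Existence

theorem rightOf_anti {a b : ℝ} (h : a ≤ b) : rightOf b ⊆ rightOf a := fun p hp =>
  show a < p.1 from h.trans_lt hp

namespace HasBddDerivs

theorem exp_mul_fst_rightOf {k : ℝ} (hk : k ≤ 0) (a : ℝ) :
    BddSmooth (fun p : ℝ × ℝ => Real.exp (k * p.1)) (rightOf a) :=
  exp_mul_fst k fun _ hp => mul_le_mul_of_nonpos_left (le_of_lt hp) hk

theorem exp_neg_fst_rightOf (a : ℝ) :
    BddSmooth (fun p : ℝ × ℝ => Real.exp (-p.1)) (rightOf a) := by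
  simpa only [neg_one_mul] using exp_mul_fst_rightOf (by norm_num : (-1 : ℝ) ≤ 0) a

end HasBddDerivs

section TailAvg

/-- The solution `a (u, t) = e^u * ∫ y in Ioi u, e^{-y} * m (y, t)` of the equation `a - a_u = m`,
written as an integral over `q = e^{u-y}`. -/
noncomputable def tailAvg (m : ℝ × ℝ → ℝ) : ℝ × ℝ → ℝ :=
  affineAvg (fun _ => 1) (fun _ => 1) (fun q => -Real.log q) m

variable {m : ℝ × ℝ → ℝ} {R : ℝ}

theorem mapsTo_sub_log_rightOf {q : ℝ} (hq : q ∈ Ioc (0 : ℝ) 1) :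
    MapsTo (fun p : ℝ × ℝ => (1 * p.1 + -Real.log q, p.2)) (rightOf R) (rightOf R) := by
  intro p hp
  simp only [rightOf, mem_ofPred_eq] at hp ⊢
  linarith [Real.log_nonpos hq.1.le hq.2]

theorem isBddAffineFamily_neg_log (R : ℝ) : IsBddAffineFamily (fun _ => 1) (fun _ => 1)
    (fun q => -Real.log q) (rightOf R) (rightOf R) where
  exists_abs_weight_le := ⟨1, by simp⟩
  abs_scale_le := by simp
  continuousOn_weight := continuousOn_const
  continuousOn_scale := continuousOn_const
  continuousOn_shift _ hq := (Real.continuousAt_log hq.1.ne').neg.continuousWithinAt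
  mapsTo _ hq := mapsTo_sub_log_rightOf (Ioo_subset_Ioc_self hq)

theorem bddSmooth_tailAvg (hm : BddSmooth m (rightOf R)) : BddSmooth (tailAvg m) (rightOf R) :=
  (isBddAffineFamily_neg_log R).bddSmooth_affineAvg (isOpen_rightOf R) hm

theorem hasDerivAt_mul_comp_sub_log (hm : BddSmooth m (rightOf R)) {p : ℝ × ℝ}
    (hp : p ∈ rightOf R) {q : ℝ} (hq : q ∈ Ioc (0 : ℝ) 1) :
    HasDerivAt (fun q : ℝ => q * m (1 * p.1 + -Real.log q, p.2))
      (1 * m (1 * p.1 + -Real.log q, p.2) -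
        1 * 1 * partialFst m (1 * p.1 + -Real.log q, p.2)) q := by
  have hlog : HasDerivAt (fun q : ℝ => 1 * p.1 + -Real.log q) (-q⁻¹) q :=
    (Real.hasDerivAt_log hq.1.ne').neg.const_add _
  refine ((hasDerivAt_id q).mul (HasDerivAt.comp (h₂ := fun y => m (y, p.2)) q
    (hm.hasPartialsAt (mapsTo_sub_log_rightOf hq hp)).hasDerivAt_fst hlog)).congr_deriv ?_
  have := hq.1.ne'
  simp only [id_eq, Function.comp_apply]
  field_simp
  ring

theorem tailAvg_sub_partialFst (hm : BddSmooth m (rightOf R)) {p : ℝ × ℝ} (hp : p ∈ rightOf R) :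
    tailAvg m p - partialFst (tailAvg m) p = m p := by
  have hF := isBddAffineFamily_neg_log R
  have hint := hF.integrableOn_integrand hm hp
  have hint' := hF.weight_mul_scale.integrableOn_integrand hm.partialFst hp
  have hzero : Tendsto (fun q : ℝ => q * m (1 * p.1 + -Real.log q, p.2)) (𝓝[>] 0) (𝓝 0) := by
    obtain ⟨C, hC⟩ := hm.exists_norm_le
    refine (tendsto_nhdsWithin_of_tendsto_nhds tendsto_id).zero_mul_isBoundedUnder_le
      (isBoundedUnder_of_eventually_le (a := C) ?_)
    filter_upwards [Ioc_mem_nhdsGT zero_lt_one] with q hq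
      using hC _ (mapsTo_sub_log_rightOf hq hp)
  have hone := (hasDerivAt_mul_comp_sub_log hm hp (right_mem_Ioc.2 zero_lt_one)).continuousAt
    |>.continuousWithinAt (s := Iio 1)
  have hFTC := intervalIntegral.integral_eq_sub_of_hasDerivAt_of_tendsto zero_lt_one
    (fun q hq => hasDerivAt_mul_comp_sub_log hm hp (Ioo_subset_Ioc_self hq))
    ((intervalIntegrable_iff_integrableOn_Ioo_of_le zero_le_one).2 (hint.sub hint')) hzero hone
  rw [intervalIntegral.integral_of_le zero_le_one, integral_Ioc_eq_integral_Ioo,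
    integral_sub hint hint'] at hFTC
  rw [show partialFst (tailAvg m) p = _ from
    (hF.hasPartialsAt_affineAvg (isOpen_rightOf R) hm hp).partialFst_eq]
  simpa [tailAvg, affineAvg] using hFTC

end TailAvg

section LangerSource

theorem exp_neg_two_mul_le_half {x : ℝ} (hx : 1 ≤ x) : Real.exp (-2 * x) ≤ 1 / 2 :=
  (Real.exp_le_exp.2 (by linarith)).trans Real.exp_neg_one_lt_half.le

/-- The normalised symbol `(e^{2u} - e^{2γ}) / e^{2u}`. -/
noncomputable def symbolRatio (γ : ℝ × ℝ → ℝ) (p : ℝ × ℝ) : ℝ := 1 - Real.exp (-2 * (p.1 - γ p))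

/-- The function `m` such that `√(e^{2u} - e^{2γ}) = e^u - e^{-u} * m`. -/
noncomputable def langerSource (γ : ℝ × ℝ → ℝ) (p : ℝ × ℝ) : ℝ :=
  Real.exp (2 * γ p) * (1 + √(symbolRatio γ p))⁻¹

variable {γ : ℝ × ℝ → ℝ} {p : ℝ × ℝ} {R : ℝ}

theorem half_le_symbolRatio (hp : 1 ≤ p.1 - γ p) : 1 / 2 ≤ symbolRatio γ p := by
  linarith [exp_neg_two_mul_le_half hp, symbolRatio.eq_def γ p]

theorem bddSmooth_symbolRatio (hγ : BddSmooth γ univ) (R : ℝ) :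
    BddSmooth (symbolRatio γ) (rightOf R) := by
  refine ((HasBddDerivs.const 1).sub ((HasBddDerivs.exp_mul_fst_rightOf
    (by norm_num : (-2 : ℝ) ≤ 0) R).mul ((hγ.mono (subset_univ _)).const_mul 2).exp)).congr
    (isOpen_rightOf R) fun p _ => ?_
  simp only [symbolRatio, ← Real.exp_add]
  ring_nf

theorem bddSmooth_langerSource (hγ : BddSmooth γ univ) (hR : ∀ p ∈ rightOf R, 1 ≤ p.1 - γ p) :
    BddSmooth (langerSource γ) (rightOf R) := by
  have hsqrt : BddSmooth (fun p => √(symbolRatio γ p)) (rightOf R) :=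
    (bddSmooth_symbolRatio hγ R).sqrt (by norm_num) fun p hp => half_le_symbolRatio (hR p hp)
  exact ((hγ.mono (subset_univ _)).const_mul 2).exp.mul (((HasBddDerivs.const 1).add hsqrt).inv
    zero_lt_one fun p _ => le_add_of_nonneg_right (Real.sqrt_nonneg _))

theorem exp_neg_mul_langerSource (hp : 1 ≤ p.1 - γ p) :
    Real.exp (-p.1) * langerSource γ p = (1 - √(symbolRatio γ p)) * Real.exp p.1 := by
  have hne : 1 + √(symbolRatio γ p) ≠ 0 := by positivity
  have hsq : √(symbolRatio γ p) ^ 2 = 1 - Real.exp (-2 * (p.1 - γ p)) :=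
    Real.sq_sqrt ((by norm_num : (0 : ℝ) ≤ 1 / 2).trans (half_le_symbolRatio hp))
  have hexp : Real.exp (-p.1) * Real.exp (2 * γ p) =
      Real.exp (-2 * (p.1 - γ p)) * Real.exp p.1 := by
    rw [← Real.exp_add, ← Real.exp_add]
    ring_nf
  rw [langerSource, ← mul_assoc, ← div_eq_mul_inv, div_eq_iff hne, hexp]
  linear_combination Real.exp p.1 * hsq

end LangerSource

namespace IsLangerVar

variable {γ S : ℝ × ℝ → ℝ} {p : ℝ × ℝ} {R : ℝ}

theorem hasPartialsAt (h : IsLangerVar γ S) (p : ℝ × ℝ) :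
    HasPartialsAt S (partialFst S p) (partialSnd S p) p :=
  (h.bddSmooth _).hasPartialsAt (mem_strip_self p)

theorem partialFst_pos (h : IsLangerVar γ S) (p : ℝ × ℝ) : 0 < partialFst S p :=
  let ⟨_, hk, hle⟩ := h.exists_pos_le_partialFst _
  hk.trans_le (hle p (mem_strip_self p))

theorem pos (h : IsLangerVar γ S) (hp : 1 ≤ p.1 - γ p) : 0 < S p :=
  let ⟨_, hk, hle⟩ := h.exists_pos_le _
  hk.trans_le (hle p (mem_strip_self p) hp)

theorem sqrt_mul_partialFst (h : IsLangerVar γ S) (hp : 1 ≤ p.1 - γ p) :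
    3 / 2 * S p ^ (1 / 2 : ℝ) * partialFst S p = √(symbolRatio γ p) * Real.exp p.1 := by
  have hS := h.pos hp
  have hS' := h.partialFst_pos p
  rw [← Real.sqrt_eq_rpow]
  refine (sq_eq_sq₀ (by positivity) (by positivity)).1 ?_
  rw [mul_pow, mul_pow, mul_pow, Real.sq_sqrt hS.le,
    Real.sq_sqrt (le_trans (by norm_num) (half_le_symbolRatio hp)), ← Real.exp_nat_mul]
  push_cast
  linear_combination 9 / 4 * h.mul_sq_partialFst p - symbolRatio.eq_def γ p * Real.exp (2 * p.1)

/-- The remainder in the expansion of `S ^ (3 / 2)` at `u = ∞`; it does not depend on `u`. -/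
noncomputable def remainder (γ S : ℝ × ℝ → ℝ) (p : ℝ × ℝ) : ℝ :=
  S p ^ (3 / 2 : ℝ) - Real.exp p.1 - Real.exp (-p.1) * tailAvg (langerSource γ) p

section Remainder

variable (hγ : BddSmooth γ univ) (hR : ∀ p ∈ rightOf R, 1 ≤ p.1 - γ p) (h : IsLangerVar γ S)
include hγ hR h

theorem hasDerivAt_remainder (hp : p ∈ rightOf R) :
    HasDerivAt (fun u => remainder γ S (u, p.2)) 0 p.1 := by
  have hsource := bddSmooth_langerSource hγ hR
  have hode := tailAvg_sub_partialFst hsource hp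
  have hpow := (h.hasPartialsAt p).comp_hasDerivAt
    (Real.hasDerivAt_rpow_const (p := 3 / 2) (Or.inl (h.pos (hR p hp)).ne'))
  have hrem : HasPartialsAt (remainder γ S) _ _ p := (hpow.sub HasPartialsAt.fst.exp).sub
    (HasPartialsAt.fst.neg.exp.mul ((bddSmooth_tailAvg hsource).hasPartialsAt hp))
  refine hrem.hasDerivAt_fst.congr_deriv ?_
  rw [show (3 / 2 - 1 : ℝ) = 1 / 2 by norm_num, h.sqrt_mul_partialFst (hR p hp)]
  linear_combination Real.exp (-p.1) * hode + exp_neg_mul_langerSource (hR p hp)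

theorem remainder_eq {u : ℝ} (hu : R < u) (hp : p ∈ rightOf R) :
    remainder γ S p = remainder γ S (u, p.2) := by
  have hder : ∀ x ∈ Ioi R, HasDerivAt (fun x => remainder γ S (x, p.2)) 0 x := fun x hx =>
    hasDerivAt_remainder hγ hR h (p := (x, p.2)) hx
  exact isOpen_Ioi.is_const_of_deriv_eq_zero isPreconnected_Ioi
    (fun x hx => (hder x hx).differentiableAt.differentiableWithinAt)
    (fun x hx => (hder x hx).deriv) hp hu

theorem bddSmooth_remainder (M : ℝ) : BddSmooth (remainder γ S) (strip M ∩ rightOf R) := by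
  obtain ⟨k, hk, hle⟩ := h.exists_pos_le M
  have hpow : BddSmooth (fun p => S p ^ (3 / 2 : ℝ)) (strip M ∩ rightOf R) :=
    ((h.bddSmooth M).mono inter_subset_left).rpow _ hk fun p hp => hle p hp.1 (hR p hp.2)
  exact (hpow.sub ((HasBddDerivs.fst_strip M).exp.mono inter_subset_left)).sub
    (((HasBddDerivs.exp_neg_fst_rightOf R).mul
      (bddSmooth_tailAvg (bddSmooth_langerSource hγ hR))).mono inter_subset_right)

theorem bddSmooth_remainder_const {u : ℝ} (hu : R < u) :
    BddSmooth (fun p : ℝ × ℝ => remainder γ S (u, p.2)) univ :=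
  (bddSmooth_remainder hγ hR h (|u| + 1)).comp
    (((HasBddDerivs.const u).of_le zero_le_one le_rfl).prodMk .snd)
    fun _ _ => ⟨lt_add_one |u|, hu⟩

end Remainder

theorem exists_expansion (hγ : BddSmooth γ univ) (h : IsLangerVar γ S) :
    ∃ R ≥ 0, ∃ c : ℝ → ℝ, ∃ a : ℝ × ℝ → ℝ, BddSmooth (fun p : ℝ × ℝ => c p.2) univ ∧
      BddSmooth a (rightOf R) ∧ ∀ p ∈ rightOf R, 1 ≤ p.1 - γ p ∧
        S p ^ (3 / 2 : ℝ) = Real.exp p.1 + c p.2 + Real.exp (-p.1) * a p := by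
  obtain ⟨C, hC⟩ := hγ.exists_norm_le
  have hC0 : 0 ≤ C := (norm_nonneg _).trans (hC 0 (mem_univ _))
  have hR : ∀ p ∈ rightOf (C + 1), 1 ≤ p.1 - γ p := fun p hp => by
    have hp' : C + 1 < p.1 := hp
    linarith [(abs_le.1 (hC p (mem_univ p))).2]
  refine ⟨C + 1, by positivity, fun t => remainder γ S (C + 2, t), tailAvg (langerSource γ),
    bddSmooth_remainder_const hγ hR h (by linarith),
    bddSmooth_tailAvg (bddSmooth_langerSource hγ hR), fun p hp => ⟨hR p hp, ?_⟩⟩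
  dsimp only
  rw [← remainder_eq hγ hR h (by linarith) hp, remainder]
  ring

end IsLangerVar

theorem rightOf_subset_strip_union (a R : ℝ) :
    rightOf a ⊆ strip (max |a| |R| + 1) ∪ rightOf R := by
  intro p hp
  by_cases hR : R < p.1
  · exact Or.inr hR
  · have hp : a < p.1 := hp
    refine Or.inl (show |p.1| < _ from abs_lt.2 ⟨?_, ?_⟩)
    · linarith [neg_abs_le a, le_max_left |a| |R|]
    · linarith [le_abs_self R, le_max_right |a| |R|]

theorem arsinh_eq_log_add_log {x : ℝ} (hx : 0 < x) :
    Real.arsinh x = Real.log x + Real.log (1 + √(1 + (x ^ 2)⁻¹)) := by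
  have hsqrt : √(1 + x ^ 2) = x * √(1 + (x ^ 2)⁻¹) := by
    rw [← Real.sqrt_sq hx.le, ← Real.sqrt_mul (sq_nonneg x), Real.sqrt_sq hx.le]
    congr 1
    field_simp
    ring
  rw [← Real.log_mul hx.ne' (by positivity), Real.arsinh, hsqrt]
  ring_nf

theorem abs_exp_neg_mul_le_half {u x C : ℝ} (hx : |x| ≤ C) (hu : 2 * C ≤ u) :
    |Real.exp (-u) * x| ≤ 1 / 2 := by
  rw [abs_mul, Real.abs_exp, Real.exp_neg, inv_mul_le_iff₀ (Real.exp_pos u)]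
  linarith [Real.add_one_le_exp u]

/-- The error, multiplied by `e^u`, in the expansion of `e^v` as `e^u + c + O(e^{-u})`. -/
noncomputable def expRemainder (v : ℝ × ℝ → ℝ) (c : ℝ → ℝ) (p : ℝ × ℝ) : ℝ :=
  Real.exp p.1 * (Real.exp (v p) - Real.exp p.1 - c p.2)

/-- The expansion `e^v = e^u + c + O(e^{-u})` as `u → +∞` of a change of variables `v` of `u`, with
a shift `c` that depends on the parameter only. -/
structure HasShiftExpansion (v : ℝ × ℝ → ℝ) (c : ℝ → ℝ) : Prop where
  bddSmooth_shift : BddSmooth (fun p : ℝ × ℝ => c p.2) univ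
  bddSmooth_expRemainder : ∀ a, BddSmooth (expRemainder v c) (rightOf a)

namespace IsLangerVar

variable {γ S : ℝ × ℝ → ℝ} {p : ℝ × ℝ}

theorem exists_rpow_eq_exp_mul (hγ : BddSmooth γ univ) (h : IsLangerVar γ S) :
    ∃ R ≥ 0, ∃ X : ℝ × ℝ → ℝ, BddSmooth X (rightOf R) ∧ ∀ p ∈ rightOf R, 1 ≤ p.1 - γ p ∧
      |X p| ≤ 1 / 2 ∧ S p ^ (3 / 2 : ℝ) = Real.exp p.1 * (1 + X p) := by
  obtain ⟨R, hR, c, a, hc, ha, hS⟩ := h.exists_expansion hγ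
  have hsum : BddSmooth (fun p => c p.2 + Real.exp (-p.1) * a p) (rightOf R) :=
    (hc.mono (subset_univ _)).add ((HasBddDerivs.exp_neg_fst_rightOf R).mul ha)
  obtain ⟨C, hC⟩ := hsum.exists_norm_le
  have hsub : rightOf (max R (2 * C)) ⊆ rightOf R := rightOf_anti (le_max_left _ _)
  refine ⟨max R (2 * C), hR.trans (le_max_left _ _),
    fun p => Real.exp (-p.1) * (c p.2 + Real.exp (-p.1) * a p),
    (HasBddDerivs.exp_neg_fst_rightOf _).mul (hsum.mono hsub), fun p hp => ?_⟩
  obtain ⟨hone, hpow⟩ := hS p (hsub hp)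
  refine ⟨hone, abs_exp_neg_mul_le_half (hC p (hsub hp))
    ((le_max_right R (2 * C)).trans (le_of_lt hp)), ?_⟩
  have hexp : Real.exp p.1 * Real.exp (-p.1) = 1 := by rw [← Real.exp_add, add_neg_cancel,
    Real.exp_zero]
  rw [hpow]
  linear_combination -(c p.2 + Real.exp (-p.1) * a p) * hexp

/-- The coordinate `3 / 2 * arsinh S`, a smooth function of `S` asymptotic to `log (S ^ (3 / 2))`:
two Langer variables are compared through it. -/
noncomputable def logCoord (S : ℝ × ℝ → ℝ) (p : ℝ × ℝ) : ℝ := 3 / 2 * Real.arsinh (S p)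

theorem hasPartialsAt_logCoord (h : IsLangerVar γ S) (p : ℝ × ℝ) :
    HasPartialsAt (logCoord S) (3 / 2 * (√(1 + S p ^ 2))⁻¹ * partialFst S p)
      (3 / 2 * (√(1 + S p ^ 2))⁻¹ * partialSnd S p) p :=
  HasPartialsAt.comp_hasDerivAt (φ := fun x => 3 / 2 * Real.arsinh x)
    ((Real.hasDerivAt_arsinh _).const_mul _) (h.hasPartialsAt p)

theorem cube_eq_of_rpow_eq {x u y : ℝ} (hx : 0 < x) (h : x ^ (3 / 2 : ℝ) = Real.exp u * y) :
    x ^ 3 = Real.exp (2 * u) * y ^ 2 := by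
  calc x ^ 3 = (x ^ (3 / 2 : ℝ)) ^ 2 := by
        rw [← Real.rpow_natCast (x ^ (3 / 2 : ℝ)), ← Real.rpow_mul hx.le, ← Real.rpow_natCast]
        norm_num
    _ = Real.exp (2 * u) * y ^ 2 := by
        rw [h, mul_pow, ← Real.exp_nat_mul, Nat.cast_ofNat]

theorem inv_sq_eq_of_rpow_eq {x u y : ℝ} (hx : 0 < x) (hy : 0 < y)
    (h : x ^ (3 / 2 : ℝ) = Real.exp u * y) :
    (x ^ 2)⁻¹ = Real.exp (-4 / 3 * u) * y ^ (-4 / 3 : ℝ) := by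
  calc (x ^ 2)⁻¹ = (x ^ (3 / 2 : ℝ)) ^ (-4 / 3 : ℝ) := by
        rw [← Real.rpow_mul hx.le, ← Real.rpow_natCast, ← Real.rpow_neg hx.le]
        norm_num
    _ = Real.exp (-4 / 3 * u) * y ^ (-4 / 3 : ℝ) := by
        rw [h, Real.mul_rpow (Real.exp_pos u).le hy.le, ← Real.exp_mul, mul_comm u]

theorem logCoord_eq {y : ℝ} (hS : 0 < S p) (hy : 0 < y)
    (h : S p ^ (3 / 2 : ℝ) = Real.exp p.1 * y) :
    logCoord S p = p.1 + Real.log y +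
      3 / 2 * Real.log (1 + √(1 + Real.exp (-4 / 3 * p.1) * y ^ (-4 / 3 : ℝ))) := by
  have hlog : 3 / 2 * Real.log (S p) = p.1 + Real.log y := by
    rw [← Real.log_rpow hS, h, Real.log_mul (Real.exp_pos _).ne' hy.ne', Real.log_exp]
  rw [logCoord, arsinh_eq_log_add_log hS, inv_sq_eq_of_rpow_eq hS hy h]
  linear_combination hlog

theorem quarter_le_partialFst_logCoord {y : ℝ} (h : IsLangerVar γ S) (hone : 1 ≤ p.1 - γ p)
    (hp : 0 ≤ p.1) (hy0 : 0 ≤ y) (hy : y ≤ 3 / 2)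
    (hpow : S p ^ (3 / 2 : ℝ) = Real.exp p.1 * y) :
    1 / 4 ≤ partialFst (logCoord S) p := by
  have hS := h.pos hone
  have hS' := h.partialFst_pos p
  have hexp : 1 ≤ Real.exp (2 * p.1) := Real.one_le_exp (by linarith)
  have hcube : S p ^ 3 ≤ 9 / 4 * Real.exp (2 * p.1) := by
    rw [cube_eq_of_rpow_eq hS hpow, mul_comm]
    exact mul_le_mul_of_nonneg_right (by nlinarith) (Real.exp_pos _).le
  have hle : S p ≤ 1 + S p ^ 3 := by nlinarith [sq_nonneg (S p - 1), pow_pos hS 3]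
  have hode : 2 / 9 * Real.exp (2 * p.1) ≤ S p * partialFst S p ^ 2 := by
    rw [h.mul_sq_partialFst]
    nlinarith [half_le_symbolRatio hone, symbolRatio.eq_def γ p]
  have hsq : 1 + S p ^ 2 ≤ (6 * partialFst S p) ^ 2 := by
    refine le_of_mul_le_mul_left (?_ : S p * _ ≤ S p * _) hS
    linarith
  have hsqrt : √(1 + S p ^ 2) ≤ 6 * partialFst S p := Real.sqrt_le_iff.2 ⟨by positivity, hsq⟩
  rw [(h.hasPartialsAt_logCoord p).partialFst_eq, mul_assoc, inv_mul_eq_div, ← mul_div_assoc,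
    le_div_iff₀ (by positivity)]
  linarith

theorem exists_bddSmooth_logCoord_sub_fst (hγ : BddSmooth γ univ) (h : IsLangerVar γ S) :
    ∃ R, BddSmooth (fun p => logCoord S p - p.1) (rightOf R) ∧
      ∀ p ∈ rightOf R, 1 / 4 ≤ partialFst (logCoord S) p := by
  obtain ⟨R, hR, X, hX, hS⟩ := h.exists_rpow_eq_exp_mul hγ
  have hle : ∀ p ∈ rightOf R, 1 / 2 ≤ 1 + X p := fun p hp => by
    linarith [(abs_le.1 (hS p hp).2.1).1]
  have hX1 : BddSmooth (fun p => 1 + X p) (rightOf R) := (HasBddDerivs.const 1).add hX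
  set Y : ℝ × ℝ → ℝ := fun p => Real.exp (-4 / 3 * p.1) * (1 + X p) ^ (-4 / 3 : ℝ)
  have hY : BddSmooth Y (rightOf R) :=
    (HasBddDerivs.exp_mul_fst_rightOf (by norm_num) R).mul (hX1.rpow _ (by norm_num) hle)
  have hY0 : ∀ p ∈ rightOf R, 1 ≤ 1 + Y p := fun p hp => le_add_of_nonneg_right
    (mul_nonneg (Real.exp_pos _).le (Real.rpow_nonneg (by linarith [hle p hp]) _))
  have hsqrt : BddSmooth (fun p => 1 + √(1 + Y p)) (rightOf R) :=
    (HasBddDerivs.const 1).add (((HasBddDerivs.const 1).add hY).sqrt zero_lt_one hY0)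
  refine ⟨R, ((hX1.log (by norm_num) hle).add ((hsqrt.log zero_lt_one fun p _ =>
    le_add_of_nonneg_right (Real.sqrt_nonneg _)).const_mul (3 / 2))).congr (isOpen_rightOf R)
    fun p hp => ?_, fun p hp => ?_⟩
  · obtain ⟨hone, -, hpow⟩ := hS p hp
    rw [logCoord_eq (h.pos hone) (by linarith [hle p hp]) hpow]
    ring
  · obtain ⟨hone, habs, hpow⟩ := hS p hp
    exact h.quarter_le_partialFst_logCoord hone (hR.trans (le_of_lt hp))
      (by linarith [hle p hp]) (by linarith [(abs_le.1 habs).2]) hpow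

theorem exists_pos_le_partialFst_logCoord (h : IsLangerVar γ S) (M : ℝ) :
    ∃ k > 0, ∀ p ∈ strip M, k ≤ partialFst (logCoord S) p := by
  obtain ⟨k, hk, hle⟩ := h.exists_pos_le_partialFst M
  obtain ⟨C, hC⟩ := (h.bddSmooth M).exists_norm_le
  refine ⟨3 / 2 * (√(1 + C ^ 2))⁻¹ * k, by positivity, fun p hp => ?_⟩
  have hsq : S p ^ 2 ≤ C ^ 2 := sq_le_sq.2 ((hC p hp).trans (le_abs_self C))
  have hkp := hle p hp
  rw [(h.hasPartialsAt_logCoord p).partialFst_eq]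
  gcongr

theorem isBddDiffeo_logCoord (hγ : BddSmooth γ univ) (h : IsLangerVar γ S) :
    IsBddDiffeo (logCoord S) := by
  obtain ⟨R, hR, hle⟩ := h.exists_bddSmooth_logCoord_sub_fst hγ
  refine ⟨fun a => ?_, fun a => ?_, fun N => ?_⟩
  · exact (((((h.bddSmooth _).comp_contDiff Real.contDiff_arsinh).const_mul _).sub
      (HasBddDerivs.fst_strip _)).union hR).mono (rightOf_subset_strip_union a R)
  · obtain ⟨k, hk, hkle⟩ := h.exists_pos_le_partialFst_logCoord (max |a| |R| + 1)
    refine ⟨min (1 / 4) k, by positivity, fun p hp => ?_⟩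
    exact (rightOf_subset_strip_union a R hp).elim
      (fun hp => (min_le_right _ _).trans (hkle p hp))
      fun hp => (min_le_left _ _).trans (hle p hp)
  · obtain ⟨M, hM⟩ := h.exists_forall_fst_le (Real.sinh (2 / 3 * N))
    refine ⟨M, fun p hp => ?_⟩
    have harsinh := Real.arsinh_le_arsinh.2 (hM p hp)
    rw [Real.arsinh_sinh] at harsinh
    rw [logCoord]
    linarith

theorem injective (hγ : BddSmooth γ univ) (h : IsLangerVar γ S) (t : ℝ) :
    Function.Injective fun x => S (x, t) := fun _ _ hxy =>
  ((h.isBddDiffeo_logCoord hγ).strictMono t).injective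
    (congrArg (fun z => 3 / 2 * Real.arsinh z) hxy)

section Transition

variable {γ₁ γ₂ S₁ S₂ v a₁ a₂ : ℝ × ℝ → ℝ} {c₁ c₂ : ℝ → ℝ} {R₁ R₂ : ℝ}

theorem exists_transition (hγ₁ : BddSmooth γ₁ univ) (hγ₂ : BddSmooth γ₂ univ)
    (h₁ : IsLangerVar γ₁ S₁) (h₂ : IsLangerVar γ₂ S₂) :
    ∃ v, IsBddDiffeo v ∧ ∀ p, S₂ (v p, p.2) = S₁ p := by
  obtain ⟨g, hg, hfg, -⟩ := (h₂.isBddDiffeo_logCoord hγ₂).exists_inverse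
  refine ⟨_, hg.comp (h₁.isBddDiffeo_logCoord hγ₁), fun p => Real.arsinh_injective ?_⟩
  exact mul_left_cancel₀ (by norm_num) (hfg (logCoord S₁ p, p.2))

theorem transition_ode (h₁ : IsLangerVar γ₁ S₁) (h₂ : IsLangerVar γ₂ S₂) (hv : IsBddDiffeo v)
    (hS : ∀ p, S₂ (v p, p.2) = S₁ p) (p : ℝ × ℝ) :
    (1 - Real.exp (-2 * (p.1 - γ₁ p))) * Real.exp (2 * p.1) =
      (1 - Real.exp (-2 * (v p - γ₂ (v p, p.2)))) * Real.exp (2 * v p) * partialFst v p ^ 2 := by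
  have hchain := ((h₂.hasPartialsAt (v p, p.2)).comp_prodMk (hv.hasPartialsAt p) .snd).partialFst_eq
  simp only [hS, mul_zero, add_zero] at hchain
  have hode₁ := h₁.mul_sq_partialFst p
  have hode₂ := h₂.mul_sq_partialFst (v p, p.2)
  change partialFst S₁ p = _ at hchain
  simp only [hS] at hode₂
  rw [hchain] at hode₁
  linear_combination -9 / 4 * hode₁ + 9 / 4 * partialFst v p ^ 2 * hode₂

theorem bddSmooth_expRemainder_strip {c : ℝ → ℝ} (hv : IsBddDiffeo v)
    (hc : BddSmooth (fun p : ℝ × ℝ => c p.2) univ) (M : ℝ) :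
    BddSmooth (expRemainder v c) (strip M) := by
  have hfst := HasBddDerivs.fst_strip M
  have hvM : BddSmooth v (strip M) := by
    simpa using ((hv.bddSmooth_sub_fst (-M)).mono (strip_subset_rightOf M)).add hfst
  exact hfst.exp.mul ((hvM.exp.sub hfst.exp).sub (hc.mono (subset_univ _)))

theorem bddSmooth_expRemainder_rightOf
    (ha₁ : BddSmooth a₁ (rightOf R₁)) (ha₂ : BddSmooth a₂ (rightOf R₂))
    (hS₁ : ∀ p ∈ rightOf R₁, S₁ p ^ (3 / 2 : ℝ) =
      Real.exp p.1 + c₁ p.2 + Real.exp (-p.1) * a₁ p)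
    (hS₂ : ∀ p ∈ rightOf R₂, S₂ p ^ (3 / 2 : ℝ) =
      Real.exp p.1 + c₂ p.2 + Real.exp (-p.1) * a₂ p)
    (hv : IsBddDiffeo v) (hS : ∀ p, S₂ (v p, p.2) = S₁ p) :
    ∃ R, BddSmooth (expRemainder v fun t => c₁ t - c₂ t) (rightOf R) := by
  obtain ⟨C, hC⟩ := hv.exists_forall_abs_sub_le R₁
  have hsub : rightOf (max R₁ (R₂ + C)) ⊆ rightOf R₁ := rightOf_anti (le_max_left _ _)
  have hmaps : MapsTo (fun p => (v p, p.2)) (rightOf (max R₁ (R₂ + C))) (rightOf R₂) := by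
    intro p hp
    have hR₂ : R₂ + C < p.1 := (le_max_right _ _).trans_lt hp
    have hvp := (abs_le.1 (hC p (hsub hp))).1
    change R₂ < v p
    linarith
  have hcomp : BddSmooth (fun p => a₂ (v p, p.2)) (rightOf (max R₁ (R₂ + C))) :=
    ha₂.comp ((hv.hasBddDerivs _).prodMk .snd) hmaps
  refine ⟨_, ((ha₁.mono hsub).sub ((hv.bddSmooth_sub_fst _).neg.exp.mul hcomp)).congr
    (isOpen_rightOf _) fun p hp => ?_⟩
  have hpow := hS₂ _ (hmaps hp)
  simp only [hS p, hS₁ p (hsub hp)] at hpow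
  have hexp : Real.exp (-(v p - p.1)) = Real.exp p.1 * Real.exp (-v p) := by
    rw [← Real.exp_add]
    ring_nf
  have hone : Real.exp p.1 * Real.exp (-p.1) = 1 := by
    rw [← Real.exp_add, add_neg_cancel, Real.exp_zero]
  dsimp only [expRemainder]
  rw [hexp]
  linear_combination Real.exp p.1 * hpow - a₁ p * hone

theorem exists_hasShiftExpansion (hγ₁ : BddSmooth γ₁ univ) (hγ₂ : BddSmooth γ₂ univ)
    (h₁ : IsLangerVar γ₁ S₁) (h₂ : IsLangerVar γ₂ S₂) :
    ∃ c : ℝ → ℝ,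
      (∀ v, IsBddDiffeo v → (∀ p, S₂ (v p, p.2) = S₁ p) → HasShiftExpansion v c) ∧
      ∀ w, IsBddDiffeo w → (∀ p, S₁ (w p, p.2) = S₂ p) → HasShiftExpansion w fun t => -c t := by
  obtain ⟨R₁, -, c₁, a₁, hc₁, ha₁, hS₁⟩ := h₁.exists_expansion hγ₁
  obtain ⟨R₂, -, c₂, a₂, hc₂, ha₂, hS₂⟩ := h₂.exists_expansion hγ₂
  refine ⟨fun t => c₁ t - c₂ t, fun v hv hS => ⟨hc₁.sub hc₂, fun a => ?_⟩,
    fun w hw hS => ⟨(hc₁.sub hc₂).neg, fun a => ?_⟩⟩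
  · obtain ⟨R, hR⟩ := bddSmooth_expRemainder_rightOf ha₁ ha₂ (fun p hp => (hS₁ p hp).2)
      (fun p hp => (hS₂ p hp).2) hv hS
    exact ((bddSmooth_expRemainder_strip hv (hc₁.sub hc₂) _).union hR).mono
      (rightOf_subset_strip_union a R)
  · obtain ⟨R, hR⟩ := bddSmooth_expRemainder_rightOf ha₂ ha₁ (fun p hp => (hS₂ p hp).2)
      (fun p hp => (hS₁ p hp).2) hw hS
    simp only [neg_sub]
    exact ((bddSmooth_expRemainder_strip hw (hc₂.sub hc₁) _).union hR).mono
      (rightOf_subset_strip_union a R)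

end Transition

end IsLangerVar

namespace HasBddDerivs

variable {m : ℕ} {N : WithTop ℕ∞} {f : ℝ → ℝ} {s : Set ℝ}

theorem of_hasDerivAt {f' : ℝ → ℝ} (hs : IsOpen s) (hf : ∀ x ∈ s, HasDerivAt f (f' x) x)
    (hf' : HasBddDerivs 0 N f' s) (hN : N ≠ ω := by simp) : HasBddDerivs 1 (N + 1) f s :=
  of_hasFDerivAt hs (fun x hx => (hf x hx).hasFDerivAt.congr_fderiv (by ext; simp))
    (hf'.clm_comp (.smulRight (.id ℝ ℝ) (ContinuousLinearMap.id ℝ ℝ))) hN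

theorem hasDerivAt (h : HasBddDerivs m ∞ f s) {x : ℝ} (hx : x ∈ s) :
    HasDerivAt f (deriv f x) x :=
  ((h.contDiffAt x hx).differentiableAt (by simp)).hasDerivAt

theorem exists_abs_deriv_le (h : HasBddDerivs m ∞ f s) (hm : m ≤ 1 := by simp) :
    ∃ C, ∀ x ∈ s, |deriv f x| ≤ C := by
  simpa [norm_iteratedFDeriv_eq_norm_iteratedDeriv, iteratedDeriv_one] using
    h.exists_bound 1 hm (by simp)

theorem exp_neg_Ioi (a : ℝ) : HasBddDerivs 0 N (fun u : ℝ => Real.exp (-u)) (Ioi a) :=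
  (exp_Iic (-a)).comp HasBddDerivs.id.neg fun u hu => (neg_le_neg (le_of_lt hu) : -u ≤ -a)

end HasBddDerivs

section Symbol

/-- `r` satisfies the symbol estimates of order `m` at infinity. -/
def IsSymbol (m : ℝ) (r : ℝ → ℝ) : Prop :=
  ∀ k : ℕ, ∃ C > 0, ∀ x : ℝ, 1 ≤ x → |iteratedDeriv k r x| ≤ C * x ^ (m - k)

variable {m : ℝ} {r : ℝ → ℝ}

theorem hasDerivAt_iteratedDeriv {r : ℝ → ℝ} {s : Set ℝ} (hs : IsOpen s)
    (hr : ContDiffOn ℝ ∞ r s) (k : ℕ) {x : ℝ} (hx : x ∈ s) :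
    HasDerivAt (iteratedDeriv k r) (iteratedDeriv (k + 1) r x) x := by
  have hdiff := (hr.differentiableOn_iteratedDerivWithin (m := k)
    (by exact_mod_cast WithTop.coe_lt_top _) hs.uniqueDiffOn).differentiableAt (hs.mem_nhds hx)
  rw [iteratedDeriv_succ]
  exact (hdiff.congr_of_eventuallyEq (eventually_of_mem (hs.mem_nhds hx) fun y hy =>
    (iteratedDerivWithin_of_isOpen hs hy).symm)).hasDerivAt

theorem exists_abs_exp_mul_iteratedDeriv_le (hb : IsSymbol m r) (k : ℕ) :
    ∃ C, ∀ u ∈ Ioi (0 : ℝ), |Real.exp ((k - m) * u) * iteratedDeriv k r (Real.exp u)| ≤ C := by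
  obtain ⟨C, -, hC⟩ := hb k
  refine ⟨C, fun u hu => ?_⟩
  have hle := hC _ (Real.one_le_exp (le_of_lt hu))
  rw [← Real.exp_mul] at hle
  calc |Real.exp ((k - m) * u) * iteratedDeriv k r (Real.exp u)|
      ≤ Real.exp ((k - m) * u) * (C * Real.exp (u * (m - k))) := by
        rw [abs_mul, Real.abs_exp]
        gcongr
    _ = C := by
        rw [mul_left_comm, ← Real.exp_add, show (k - m) * u + u * (m - k) = 0 by ring,
          Real.exp_zero, mul_one]

theorem bddSmooth_exp_mul_comp_exp (hr : ContDiffOn ℝ ∞ r (Ioi 0)) (hb : IsSymbol m r) :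
    BddSmooth (fun u => Real.exp (-m * u) * r (Real.exp u)) (Ioi 0) := by
  have hder : ∀ (k : ℕ) (u : ℝ),
      HasDerivAt (fun u => Real.exp ((k - m) * u) * iteratedDeriv k r (Real.exp u))
        ((k - m) * (Real.exp ((k - m) * u) * iteratedDeriv k r (Real.exp u)) +
          Real.exp (((k + 1 : ℕ) - m) * u) * iteratedDeriv (k + 1) r (Real.exp u)) u := by
    intro k u
    refine ((((hasDerivAt_id u).const_mul (k - m)).exp).mul
      ((hasDerivAt_iteratedDeriv isOpen_Ioi hr k (Real.exp_pos u)).comp u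
        (Real.hasDerivAt_exp u))).congr_deriv ?_
    have hexp : Real.exp (((k + 1 : ℕ) - m) * u) = Real.exp ((k - m) * u) * Real.exp u := by
      rw [← Real.exp_add]
      push_cast
      ring_nf
    rw [hexp]
    simp only [id_eq, Function.comp_apply]
    ring
  have hbdd : ∀ n k : ℕ, HasBddDerivs 0 n
      (fun u => Real.exp ((k - m) * u) * iteratedDeriv k r (Real.exp u)) (Ioi 0) := by
    intro n
    induction n with
    | zero =>
      intro k
      exact .zero_of_continuousOn isOpen_Ioi
        (fun u _ => (hder k u).continuousAt.continuousWithinAt)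
        fun _ => exists_abs_exp_mul_iteratedDeriv_le hb k
    | succ n ih =>
      intro k
      rw [Nat.cast_succ]
      exact (HasBddDerivs.of_hasDerivAt isOpen_Ioi (fun u _ => hder k u)
        (((ih k).const_mul _).add (ih (k + 1)))).of_exists_norm_le
          (exists_abs_exp_mul_iteratedDeriv_le hb k)
  simpa using HasBddDerivs.infty_of_nat fun n => hbdd n 0

end Symbol

section Cutoff

theorem bddSmooth_smoothTransition : BddSmooth Real.smoothTransition univ := by
  have hIio : BddSmooth Real.smoothTransition (Iio 0) := (HasBddDerivs.const 0).congr isOpen_Iio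
    fun _ hu => (Real.smoothTransition.zero_of_nonpos (le_of_lt hu)).symm
  have hIcc : BddSmooth Real.smoothTransition (Icc 0 1) := .of_contDiffOn_of_isCompact
    Real.smoothTransition.contDiff.contDiffOn isOpen_univ isCompact_Icc (subset_univ _)
  have hIoi : BddSmooth Real.smoothTransition (Ioi 1) := (HasBddDerivs.const 1).congr isOpen_Ioi
    fun _ hu => (Real.smoothTransition.one_of_one_le (le_of_lt hu)).symm
  refine ((hIio.union hIcc).union hIoi).mono ?_
  rw [union_assoc, Icc_union_Ioi_eq_Ici zero_le_one, Iio_union_Ici]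

/-- The function `f`, smoothly cut off to the left of `a`. -/
noncomputable def cutoff (a : ℝ) (f : ℝ → ℝ) (u : ℝ) : ℝ := Real.smoothTransition (u - a) * f u

variable {a b u δ K : ℝ} {f : ℝ → ℝ}

theorem cutoff_eq_zero (hu : u ≤ a) : cutoff a f u = 0 := by
  rw [cutoff, Real.smoothTransition.zero_of_nonpos (sub_nonpos.2 hu), zero_mul]

theorem cutoff_eq_self (hu : a + 1 ≤ u) : cutoff a f u = f u := by
  rw [cutoff, Real.smoothTransition.one_of_one_le (le_sub_iff_add_le'.2 hu), one_mul]

theorem bddSmooth_cutoff (hf : BddSmooth f (Ioi b)) (hba : b < a) :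
    BddSmooth (cutoff a f) univ := by
  have hIio : BddSmooth (cutoff a f) (Iio a) := (HasBddDerivs.const 0).congr isOpen_Iio
    fun _ hu => (cutoff_eq_zero (le_of_lt hu)).symm
  have hIoi : BddSmooth (cutoff a f) (Ioi b) := (bddSmooth_smoothTransition.comp
    (HasBddDerivs.id.sub ((HasBddDerivs.const a).of_le zero_le_one le_rfl))
    (mapsTo_univ _ _)).mul hf
  exact (hIio.union hIoi).mono (Iio_union_Ioi_of_lt hba).ge

theorem abs_cutoff_le (hf : ∀ u ≥ a, |f u| ≤ δ) : |cutoff a f u| ≤ δ := by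
  rcases le_total a u with hu | hu
  · rw [cutoff, abs_mul, abs_of_nonneg (Real.smoothTransition.nonneg _)]
    exact (mul_le_of_le_one_left (abs_nonneg _) (Real.smoothTransition.le_one _)).trans (hf u hu)
  · rw [cutoff_eq_zero hu, abs_zero]
    exact (abs_nonneg _).trans (hf a le_rfl)

theorem abs_deriv_cutoff_le (hK : ∀ u, |deriv Real.smoothTransition u| ≤ K)
    (hf : ∀ u ≥ a, |f u| ≤ δ) (hdf : ∀ u ≥ a, DifferentiableAt ℝ f u)
    (hf' : ∀ u ≥ a, |deriv f u| ≤ δ) : |deriv (cutoff a f) u| ≤ (K + 1) * δ := by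
  have hK0 : 0 ≤ K := (abs_nonneg _).trans (hK 0)
  have hδ : 0 ≤ δ := (abs_nonneg _).trans (hf a le_rfl)
  rcases lt_or_ge u a with hu | hu
  · have hzero : cutoff a f =ᶠ[𝓝 u] fun _ => 0 :=
      eventually_of_mem (Iio_mem_nhds hu) fun _ hv => cutoff_eq_zero (le_of_lt hv)
    rw [hzero.deriv_eq, deriv_const, abs_zero]
    positivity
  · have hχ : HasDerivAt (fun u => Real.smoothTransition (u - a))
        (deriv Real.smoothTransition (u - a)) u :=
      (Real.smoothTransition.contDiff.differentiable one_ne_zero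
        (u - a)).hasDerivAt.comp_sub_const u a
    have hχ1 : |Real.smoothTransition (u - a)| ≤ 1 := by
      rw [abs_of_nonneg (Real.smoothTransition.nonneg _)]
      exact Real.smoothTransition.le_one _
    have hder : deriv (cutoff a f) u = _ := (hχ.mul (hdf u hu).hasDerivAt).deriv
    calc |deriv (cutoff a f) u|
        ≤ |deriv Real.smoothTransition (u - a)| * |f u| +
          |Real.smoothTransition (u - a)| * |deriv f u| := by
          rw [hder, ← abs_mul, ← abs_mul]
          exact abs_add_le _ _
      _ ≤ K * δ + 1 * δ := by
          gcongr
          exacts [hK _, hf u hu, hf' u hu]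
      _ = (K + 1) * δ := by ring

theorem exists_forall_abs_le_one_of_tendsto_zero (hf : BddSmooth f (Ioi b))
    (h₀ : Tendsto f atTop (𝓝 0)) (h₁ : Tendsto (deriv f) atTop (𝓝 0)) :
    ∃ s N, BddSmooth N univ ∧ (∀ u, |N u| ≤ 1) ∧ (∀ u, |deriv N u| ≤ 1) ∧
      ∀ u ≥ s, N u = f u := by
  obtain ⟨K, hK⟩ := bddSmooth_smoothTransition.exists_abs_deriv_le
  have hK0 : 0 ≤ K := (abs_nonneg _).trans (hK 0 (mem_univ _))
  have hδ : 0 < (K + 1)⁻¹ := by positivity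
  have hev₀ := h₀.abs.eventually_le_const (abs_zero.trans_lt hδ)
  have hev₁ := h₁.abs.eventually_le_const (abs_zero.trans_lt hδ)
  obtain ⟨a, ha⟩ := eventually_atTop.1 (hev₀.and (hev₁.and (eventually_gt_atTop b)))
  refine ⟨a + 1, cutoff a f, bddSmooth_cutoff hf (ha a le_rfl).2.2, fun u => ?_, fun u => ?_,
    fun u hu => cutoff_eq_self hu⟩
  · exact (abs_cutoff_le fun u hu => (ha u hu).1).trans (inv_le_one_of_one_le₀ (by linarith))
  · exact (abs_deriv_cutoff_le (fun u => hK u (mem_univ u)) (fun u hu => (ha u hu).1)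
      (fun u hu => (hf.hasDerivAt (ha u hu).2.2).differentiableAt)
      fun u hu => (ha u hu).2.1).trans_eq (mul_inv_cancel₀ (by positivity))

end Cutoff

section LogPotential

variable {U m : ℝ → ℝ} {κ : ℝ}

theorem tendsto_exp_neg_mul_zero {C : ℝ} (hm : ∀ u ∈ Ioi (0 : ℝ), |m u| ≤ C) :
    Tendsto (fun u => Real.exp (-u) * m u) atTop (𝓝 0) :=
  (Real.tendsto_exp_neg_atTop_nhds_zero).zero_mul_isBoundedUnder_le
    (isBoundedUnder_of_eventually_le (a := C) ((eventually_gt_atTop 0).mono hm))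

theorem tendsto_deriv_exp_neg_mul_zero (hm : BddSmooth m (Ioi 0)) :
    Tendsto (deriv fun u => Real.exp (-u) * m u) atTop (𝓝 0) := by
  obtain ⟨C, hC⟩ := hm.exists_norm_le
  obtain ⟨D, hD⟩ := hm.exists_abs_deriv_le
  refine (tendsto_exp_neg_mul_zero (m := fun u => deriv m u - m u) (C := D + C) fun u hu =>
    (abs_sub _ _).trans (add_le_add (hD u hu) (hC u hu))).congr' ?_
  filter_upwards [eventually_gt_atTop 0] with u hu
  refine (((hasDerivAt_neg u).exp.mul (hm.hasDerivAt hu)).congr_deriv ?_).deriv.symm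
  ring

theorem exists_exp_mul_comp_exp_eq (hU : ContDiffOn ℝ ∞ U (Ioi 0))
    (hUκ : IsSymbol (-3) fun t => U t - κ / t ^ 2) :
    ∃ m : ℝ → ℝ, BddSmooth m (Ioi 0) ∧
      ∀ u, Real.exp (2 * u) * U (Real.exp u) = κ + Real.exp (-u) * m u := by
  have hr : ContDiffOn ℝ ∞ (fun t => U t - κ / t ^ 2) (Ioi 0) :=
    hU.sub (contDiffOn_const.div (contDiffOn_id.pow 2) fun x hx => pow_ne_zero 2 (ne_of_gt hx))
  refine ⟨_, bddSmooth_exp_mul_comp_exp hr hUκ, fun u => ?_⟩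
  have hexp₂ : Real.exp (2 * u) = Real.exp u ^ 2 := by rw [← Real.exp_nat_mul, Nat.cast_ofNat]
  have hexp₃ : Real.exp (-(-3) * u) = Real.exp u ^ 3 := by
    rw [← Real.exp_nat_mul, neg_neg, Nat.cast_ofNat]
  simp only [hexp₂, hexp₃, Real.exp_neg]
  field_simp
  ring

theorem exists_logPotential (hU : ContDiffOn ℝ ∞ U (Ioi 0)) (hκ : 0 < κ)
    (hUκ : IsSymbol (-3) fun t => U t - κ / t ^ 2) :
    ∃ s, ∃ G : ℝ → ℝ, BddSmooth G univ ∧ (∀ u, |deriv G u| ≤ 1 / 2) ∧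
      ∀ u ≥ s, Real.exp (2 * G u) = Real.exp (2 * u) * U (Real.exp u) := by
  obtain ⟨m, hm, hUm⟩ := exists_exp_mul_comp_exp_eq hU hUκ
  have hm' := hm.const_mul (2 / κ)
  obtain ⟨C, hC⟩ := hm'.exists_norm_le
  obtain ⟨s, N, hN, hN₀, hN₁, hNm⟩ := exists_forall_abs_le_one_of_tendsto_zero
    ((HasBddDerivs.exp_neg_Ioi 0).mul hm') (tendsto_exp_neg_mul_zero hC)
    (tendsto_deriv_exp_neg_mul_zero hm')
  have hle : ∀ u, 1 ≤ 2 + N u := fun u => by linarith [(abs_le.1 (hN₀ u)).1]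
  have hpos : ∀ u, 0 < 2 + N u := fun u => one_pos.trans_le (hle u)
  refine ⟨s, fun u => 1 / 2 * (Real.log (κ / 2) + Real.log (2 + N u)), ((HasBddDerivs.const _).add
    (((HasBddDerivs.const 2).add hN).log one_pos fun u _ => hle u)).const_mul _, fun u => ?_,
    fun u hu => ?_⟩
  · rw [(((((hN.hasDerivAt (mem_univ u)).const_add 2).log (hpos u).ne').const_add _).const_mul
      _).deriv, abs_mul, abs_of_pos one_half_pos, abs_div, abs_of_pos (hpos u)]
    exact mul_le_of_le_one_right one_half_pos.le
      (div_le_one_of_le₀ ((hN₁ u).trans (hle u)) (hpos u).le)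
  · rw [← mul_assoc, mul_one_div_cancel two_ne_zero, one_mul, Real.exp_add,
      Real.exp_log (half_pos hκ), Real.exp_log (hpos u), hUm, hNm u hu]
    field_simp

theorem exists_rescaled_logPotential (hU : ContDiffOn ℝ ∞ U (Ioi 0)) (hκ : 0 < κ)
    (hUκ : IsSymbol (-3) fun t => U t - κ / t ^ 2) :
    ∃ γ s, BddSmooth γ univ ∧ (∀ p, |partialFst γ p| ≤ 1 / 2) ∧ ∀ p : ℝ × ℝ, s ≤ p.1 - p.2 / 2 →
      Real.exp (2 * γ p) =
        Real.exp (2 * (p.1 - p.2 / 2)) * U (Real.exp (p.1 - p.2 / 2)) := by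
  obtain ⟨s, G, hG, hG', hGU⟩ := exists_logPotential hU hκ hUκ
  have hlin : HasBddDerivs 1 ∞ (fun p : ℝ × ℝ => p.1 - 1 / 2 * p.2) univ :=
    HasBddDerivs.fst.sub (HasBddDerivs.snd.const_mul _)
  refine ⟨fun p => G (p.1 - 1 / 2 * p.2), s, hG.comp hlin (mapsTo_univ _ _), fun p => ?_,
    fun p hp => ?_⟩
  · rw [((HasPartialsAt.fst.sub ((HasPartialsAt.const (1 / 2)).mul .snd)).comp_hasDerivAt
      (hG.hasDerivAt (mem_univ _))).partialFst_eq]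
    simpa using hG' (p.1 - 1 / 2 * p.2)
  · rw [← hGU _ hp]
    ring_nf

end LogPotential

section LogNormalForm

variable {v w : ℝ × ℝ → ℝ}

/-- Changes of the first variable which are inverse to each other for each value of the second. -/
structure IsBddDiffeoPair (v w : ℝ × ℝ → ℝ) : Prop where
  left : IsBddDiffeo v
  right : IsBddDiffeo w
  right_left : ∀ x t, w (v (x, t), t) = x
  left_right : ∀ x t, v (w (x, t), t) = x

theorem IsBddDiffeoPair.symm (h : IsBddDiffeoPair v w) : IsBddDiffeoPair w v :=
  ⟨h.right, h.left, h.left_right, h.right_left⟩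

/-- The equation `1 - E⁻¹ U(E^{-1/2} y) = (∂_y ξ)² (1 - ξ⁻²)` and the normalization at the turning
point, in the variables `p = (log y, log E)` and `v = log ξ`; both are only asked for where the
argument `E^{-1/2} y` of the potential is at least `e^s`. -/
structure IsLogNormalForm (U : ℝ → ℝ) (s : ℝ) (v : ℝ × ℝ → ℝ) : Prop where
  ode : ∀ p : ℝ × ℝ, s ≤ p.1 - p.2 / 2 →
    (1 - Real.exp (-p.2) * U (Real.exp (p.1 - p.2 / 2))) * Real.exp (2 * p.1) =
      (1 - Real.exp (-2 * v p)) * Real.exp (2 * v p) * partialFst v p ^ 2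
  eq_zero : ∀ p : ℝ × ℝ, s ≤ p.1 - p.2 / 2 → U (Real.exp (p.1 - p.2 / 2)) = Real.exp p.2 → v p = 0

theorem IsLangerVar.isLogNormalForm {U : ℝ → ℝ} {γ S₁ S₂ : ℝ × ℝ → ℝ} {s : ℝ}
    (hγU : ∀ p : ℝ × ℝ, s ≤ p.1 - p.2 / 2 →
      Real.exp (2 * γ p) = Real.exp (2 * (p.1 - p.2 / 2)) * U (Real.exp (p.1 - p.2 / 2)))
    (h₁ : IsLangerVar γ S₁) (h₂ : IsLangerVar (fun _ => 0) S₂) (hv : IsBddDiffeo v)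
    (hS : ∀ p, S₂ (v p, p.2) = S₁ p) : IsLogNormalForm U s v where
  ode p hp := by
    have hode := h₁.transition_ode h₂ hv hS p
    rw [sub_zero] at hode
    rw [← hode, show -2 * (p.1 - γ p) = -2 * p.1 + 2 * γ p by ring, Real.exp_add, hγU p hp,
      ← mul_assoc, ← Real.exp_add]
    ring_nf
  eq_zero p hp hU := by
    have hturn : p.1 = γ p := by
      have hexp := hγU p hp
      rw [hU, ← Real.exp_add] at hexp
      linarith [Real.exp_injective hexp]
    refine h₂.injective (.const 0) p.2 ?_
    change S₂ (v p, p.2) = S₂ (0, p.2)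
    rw [hS p, h₁.eq_zero p hturn, h₂.eq_zero _ rfl]

theorem exists_isLogNormalForm {U : ℝ → ℝ} {κ : ℝ} (hU : ContDiffOn ℝ ∞ U (Ioi 0)) (hκ : 0 < κ)
    (hUκ : IsSymbol (-3) fun t => U t - κ / t ^ 2) :
    ∃ v w c s, IsBddDiffeoPair v w ∧ HasShiftExpansion v c ∧ (HasShiftExpansion w fun t => -c t) ∧
      IsLogNormalForm U s v := by
  obtain ⟨γ, s, hγ, hγ', hγU⟩ := exists_rescaled_logPotential hU hκ hUκ
  have hzero : BddSmooth (fun _ : ℝ × ℝ => (0 : ℝ)) univ := .const 0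
  obtain ⟨S₁, h₁⟩ := exists_isLangerVar hγ hγ'
  obtain ⟨S₂, h₂⟩ := exists_isLangerVar hzero fun p => by
    rw [(HasPartialsAt.const 0).partialFst_eq]
    norm_num
  obtain ⟨v, hv, hSv⟩ := h₁.exists_transition hγ hzero h₂
  obtain ⟨w, hw, hSw⟩ := h₂.exists_transition hzero hγ h₁
  obtain ⟨c, hcv, hcw⟩ := h₁.exists_hasShiftExpansion hγ hzero h₂
  refine ⟨v, w, c, s, ⟨hv, hw, fun x t => h₁.injective hγ t ?_,
    fun x t => h₂.injective hzero t ?_⟩, hcv v hv hSv, hcw w hw hSw,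
    h₁.isLogNormalForm hγU h₂ hv hSv⟩
  · exact (hSw (v (x, t), t)).trans (hSv (x, t))
  · exact (hSv (w (x, t), t)).trans (hSw (x, t))

end LogNormalForm

section ExpRegion

/-- The region of the quadrant `y, E > 0` on which `(log y, log E)` belongs to `D`. -/
def expRegion (D : Set (ℝ × ℝ)) : Set (ℝ × ℝ) :=
  {p | (0 < p.1 ∧ 0 < p.2) ∧ (Real.log p.1, Real.log p.2) ∈ D}

variable {D : Set (ℝ × ℝ)} {F : ℝ × ℝ → ℝ} {f : ℝ → ℝ → ℝ} {m : ℝ}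

theorem isOpen_expRegion (hD : IsOpen D) : IsOpen (expRegion D) := by
  have hcont : ContinuousOn (fun p : ℝ × ℝ => (Real.log p.1, Real.log p.2)) (Ioi 0 ×ˢ Ioi 0) :=
    (continuousOn_fst.log fun p hp => ne_of_gt hp.1).prodMk
      (continuousOn_snd.log fun p hp => ne_of_gt hp.2)
  exact hcont.isOpen_inter_preimage (isOpen_Ioi.prod isOpen_Ioi) hD

theorem exists_iteratedDeriv_fst_eq (hD : IsOpen D) (hF : BddSmooth F D)
    (hf : ∀ p ∈ expRegion D, f p.1 p.2 = p.1 ^ m * F (Real.log p.1, Real.log p.2)) (ℓ : ℕ) :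
    ∃ G, BddSmooth G D ∧ ∀ p ∈ expRegion D, iteratedDeriv ℓ (fun y => f y p.2) p.1 =
      p.1 ^ (m - ℓ) * G (Real.log p.1, Real.log p.2) := by
  induction ℓ with
  | zero => exact ⟨F, hF, fun p hp => by simpa using hf p hp⟩
  | succ ℓ ih =>
    obtain ⟨G, hG, hℓ⟩ := ih
    refine ⟨fun p => (m - ℓ) * G p + partialFst G p, (hG.const_mul _).add hG.partialFst,
      fun p hp => ?_⟩
    have hev : iteratedDeriv ℓ (fun y => f y p.2) =ᶠ[𝓝 p.1]
        fun y => y ^ (m - ℓ) * G (Real.log y, Real.log p.2) :=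
      eventually_of_mem ((Continuous.prodMk_left p.2).continuousAt.preimage_mem_nhds
        ((isOpen_expRegion hD).mem_nhds hp)) fun y hy => hℓ (y, p.2) hy
    have hy := hp.1.1.ne'
    have hder : HasDerivAt (fun y => G (Real.log y, Real.log p.2)) _ p.1 :=
      (hG.hasPartialsAt hp.2).hasDerivAt_fst.comp p.1 (Real.hasDerivAt_log hy)
    rw [iteratedDeriv_succ, hev.deriv_eq,
      ((Real.hasDerivAt_rpow_const (p := m - ℓ) (Or.inl hy)).fun_mul hder).deriv, Nat.cast_succ,
      ← sub_sub, Real.rpow_sub_one hy]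
    field_simp

theorem exists_iteratedDeriv_snd_eq (hD : IsOpen D) (hF : BddSmooth F D)
    (hf : ∀ p ∈ expRegion D, f p.1 p.2 = p.1 ^ m * F (Real.log p.1, Real.log p.2)) (k : ℕ) :
    ∃ G, BddSmooth G D ∧ ∀ p ∈ expRegion D, iteratedDeriv k (fun E => f p.1 E) p.2 =
      p.2 ^ (-(k : ℝ)) * (p.1 ^ m * G (Real.log p.1, Real.log p.2)) := by
  induction k with
  | zero => exact ⟨F, hF, fun p hp => by simpa using hf p hp⟩
  | succ k ih =>
    obtain ⟨G, hG, hk⟩ := ih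
    refine ⟨fun p => -(k : ℝ) * G p + partialSnd G p, (hG.const_mul _).add hG.partialSnd,
      fun p hp => ?_⟩
    have hev : iteratedDeriv k (fun E => f p.1 E) =ᶠ[𝓝 p.2]
        fun E => E ^ (-(k : ℝ)) * (p.1 ^ m * G (Real.log p.1, Real.log E)) :=
      eventually_of_mem ((Continuous.prodMk_right p.1).continuousAt.preimage_mem_nhds
        ((isOpen_expRegion hD).mem_nhds hp)) fun E hE => hk (p.1, E) hE
    have hE := hp.1.2.ne'
    have hder : HasDerivAt (fun E => G (Real.log p.1, Real.log E)) _ p.2 :=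
      (hG.hasPartialsAt hp.2).hasDerivAt_snd.comp p.2 (Real.hasDerivAt_log hE)
    rw [iteratedDeriv_succ, hev.deriv_eq, ((Real.hasDerivAt_rpow_const (p := -(k : ℝ))
      (Or.inl hE)).fun_mul (hder.const_mul _)).deriv, Nat.cast_succ, neg_add, ← sub_eq_add_neg,
      Real.rpow_sub_one hE]
    field_simp

theorem exists_abs_iteratedDeriv_iteratedDeriv_le (hD : IsOpen D) (hF : BddSmooth F D)
    (hf : ∀ p ∈ expRegion D, f p.1 p.2 = p.1 ^ m * F (Real.log p.1, Real.log p.2)) (k ℓ : ℕ) :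
    ∃ C > 0, ∀ p ∈ expRegion D,
      |iteratedDeriv k (fun E => iteratedDeriv ℓ (fun y => f y E) p.1) p.2| ≤
        C * p.2 ^ (-(k : ℝ)) * p.1 ^ (m - ℓ) := by
  obtain ⟨G, hG, hfst⟩ := exists_iteratedDeriv_fst_eq hD hF hf ℓ
  obtain ⟨H, hH, hsnd⟩ := exists_iteratedDeriv_snd_eq
    (f := fun y E => iteratedDeriv ℓ (fun y => f y E) y) hD hG hfst k
  obtain ⟨C, hC⟩ := hH.exists_norm_le
  refine ⟨max C 1, by positivity, fun p hp => ?_⟩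
  have hy := Real.rpow_pos_of_pos hp.1.1 (m - ℓ)
  have hE := Real.rpow_pos_of_pos hp.1.2 (-(k : ℝ))
  calc |iteratedDeriv k (fun E => iteratedDeriv ℓ (fun y => f y E) p.1) p.2|
      = |H (Real.log p.1, Real.log p.2)| * p.2 ^ (-(k : ℝ)) * p.1 ^ (m - ℓ) := by
        rw [hsnd p hp, abs_mul, abs_mul, abs_of_pos hy, abs_of_pos hE]
        ring
    _ ≤ max C 1 * p.2 ^ (-(k : ℝ)) * p.1 ^ (m - ℓ) := by
        gcongr
        exact (hC _ hp.2).trans (le_max_left _ _)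

theorem iteratedDerivWithin_iteratedDerivWithin_Ioi_eq {J : Set ℝ} (hJ : IsOpen J) {g : ℝ → ℝ}
    (hg : ContinuousOn g J) (k ℓ : ℕ) {y E : ℝ} (hE : E ∈ J) (hy : g E < y) :
    iteratedDerivWithin k (fun E => iteratedDerivWithin ℓ (fun y => f y E) (Ioi (g E)) y) J E =
      iteratedDeriv k (fun E => iteratedDeriv ℓ (fun y => f y E) y) E := by
  rw [iteratedDerivWithin_of_isOpen hJ hE]
  refine Filter.EventuallyEq.iteratedDeriv_eq k ?_
  filter_upwards [(hg.continuousAt (hJ.mem_nhds hE)).eventually_lt_const hy] with E' hE'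
  exact iteratedDerivWithin_of_isOpen isOpen_Ioi hE'

theorem exists_abs_iteratedDerivWithin_Ioi_le (hD : IsOpen D) (hF : BddSmooth F D)
    (hf : ∀ p ∈ expRegion D, f p.1 p.2 = p.1 ^ m * F (Real.log p.1, Real.log p.2)) {J : Set ℝ}
    (hJ : IsOpen J) {g : ℝ → ℝ} (hg : ContinuousOn g J)
    (hgD : ∀ E ∈ J, ∀ y ∈ Ioi (g E), (y, E) ∈ expRegion D) (k ℓ : ℕ) :
    ∃ C > 0, ∀ E ∈ J, ∀ y ∈ Ioi (g E), |iteratedDerivWithin k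
      (fun E => iteratedDerivWithin ℓ (fun y => f y E) (Ioi (g E)) y) J E| ≤
        C * E ^ (-(k : ℝ)) * y ^ (m - ℓ) := by
  obtain ⟨C, hC₀, hC⟩ := exists_abs_iteratedDeriv_iteratedDeriv_le hD hF hf k ℓ
  refine ⟨C, hC₀, fun E hE y hy => ?_⟩
  rw [iteratedDerivWithin_iteratedDerivWithin_Ioi_eq hJ hg k ℓ hE hy]
  exact hC (y, E) (hgD E hE y hy)

end ExpRegion

section ExpConj

variable {v w : ℝ × ℝ → ℝ} {c : ℝ → ℝ} {ε y E : ℝ}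

/-- The change of variables `v` expressed in the exponentials of its variables. -/
noncomputable def expConj (v : ℝ × ℝ → ℝ) (y E : ℝ) : ℝ := Real.exp (v (Real.log y, Real.log E))

theorem expConj_pos (v : ℝ × ℝ → ℝ) (y E : ℝ) : 0 < expConj v y E := Real.exp_pos _

theorem IsBddDiffeo.hasDerivAt_expConj (hv : IsBddDiffeo v) (hy : 0 < y) (E : ℝ) :
    HasDerivAt (fun y => expConj v y E)
      (expConj v y E * (partialFst v (Real.log y, Real.log E) * y⁻¹)) y :=
  ((hv.hasPartialsAt (Real.log y, Real.log E)).hasDerivAt_fst.comp y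
    (Real.hasDerivAt_log hy.ne')).exp

theorem IsBddDiffeo.contDiffOn_expConj (hv : IsBddDiffeo v) (n : ℕ) :
    ContDiffOn ℝ n (fun p : ℝ × ℝ => expConj v p.1 p.2) (Ioi 0 ×ˢ Ioi 0) :=
  (hv.contDiff.of_le (by exact_mod_cast le_top)).exp.comp_contDiffOn
    ((contDiffOn_fst.log fun _ hp => ne_of_gt hp.1).prodMk
      (contDiffOn_snd.log fun _ hp => ne_of_gt hp.2))

theorem IsBddDiffeo.strictMonoOn_expConj (hv : IsBddDiffeo v) (E : ℝ) :
    StrictMonoOn (fun y => expConj v y E) (Ioi 0) := fun _ hy _ _ hyy' =>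
  Real.exp_lt_exp.2 (hv.strictMono _ (Real.log_lt_log hy hyy'))

theorem IsBddDiffeo.exists_abs_iteratedDerivWithin_expConj_le (hv : IsBddDiffeo v) {a : ℝ}
    {J : Set ℝ} (hJ : IsOpen J) (hJ₀ : J ⊆ Ioi 0) {g : ℝ → ℝ} (hg : ContinuousOn g J)
    (hag : ∀ E ∈ J, Real.exp a ≤ g E) (k ℓ : ℕ) :
    ∃ C > 0, ∀ E ∈ J, ∀ y ∈ Ioi (g E), |iteratedDerivWithin k
      (fun E => iteratedDerivWithin ℓ (fun y => expConj v y E) (Ioi (g E)) y) J E| ≤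
        C * E ^ (-(k : ℝ)) * y ^ ((1 : ℝ) - ℓ) := by
  refine exists_abs_iteratedDerivWithin_Ioi_le (isOpen_rightOf a) (hv.bddSmooth_sub_fst a).exp
    (fun p hp => ?_) hJ hg (fun E hE y hy => ?_) k ℓ
  · rw [Real.exp_sub, Real.exp_log hp.1.1, Real.rpow_one, mul_div_cancel₀ _ hp.1.1.ne', expConj]
  · have hay : Real.exp a < y := (hag E hE).trans_lt hy
    have hy₀ : 0 < y := (Real.exp_pos a).trans hay
    exact ⟨⟨hy₀, hJ₀ hE⟩, (Real.lt_log_iff_exp_lt hy₀).2 hay⟩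

theorem HasShiftExpansion.exists_expansion_expConj (h : HasShiftExpansion v c) (E₀ : ℝ) :
    ∃ ξ₀ : ℝ → ℝ, ∃ ρ₀ : ℝ → ℝ → ℝ,
      (∀ E ∈ Ioo 0 E₀, ∀ y ∈ Ioi (1 : ℝ), expConj v y E = y + ξ₀ E + y⁻¹ * ρ₀ y E) ∧
      (∀ k : ℕ, ∃ C > 0, ∀ E ∈ Ioo 0 E₀,
        |iteratedDerivWithin k ξ₀ (Ioo 0 E₀) E| ≤ C * E ^ (-(k : ℝ))) ∧
      ∀ k j : ℕ, ∃ C > 0, ∀ E ∈ Ioo 0 E₀, ∀ y ∈ Ioi (1 : ℝ), |iteratedDerivWithin k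
        (fun E => iteratedDerivWithin j (fun y => ρ₀ y E) (Ioi 1) y) (Ioo 0 E₀) E| ≤
          C * y ^ (-(j : ℝ)) * E ^ (-(k : ℝ)) := by
  have hregion : ∀ E ∈ Ioo 0 E₀, ∀ y ∈ Ioi (1 : ℝ), (y, E) ∈ expRegion (rightOf (-1)) :=
    fun E hE y hy => ⟨⟨one_pos.trans hy, hE.1⟩, neg_one_lt_zero.trans (Real.log_pos hy)⟩
  refine ⟨fun E => c (Real.log E), fun y E => y * (expConj v y E - y - c (Real.log E)),
    fun E _ y hy => ?_, fun k => ?_, fun k j => ?_⟩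
  · have hy₀ : y ≠ 0 := (one_pos.trans hy).ne'
    field_simp
    ring
  · obtain ⟨C, hC₀, hC⟩ := exists_abs_iteratedDerivWithin_Ioi_le (m := 0)
      (f := fun _ E => c (Real.log E)) (isOpen_rightOf (-1))
      (h.bddSmooth_shift.mono (subset_univ _)) (fun p _ => by simp) isOpen_Ioo
      (continuousOn_const (c := 1)) hregion k 0
    exact ⟨C, hC₀, fun E hE => by simpa using hC E hE 2 (mem_Ioi.2 one_lt_two)⟩
  · obtain ⟨C, hC₀, hC⟩ := exists_abs_iteratedDerivWithin_Ioi_le (m := 0)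
      (f := fun y E => y * (expConj v y E - y - c (Real.log E))) (isOpen_rightOf (-1))
      (h.bddSmooth_expRemainder (-1))
      (fun p hp => by simp [expRemainder, expConj, Real.exp_log hp.1.1]) isOpen_Ioo
      (continuousOn_const (c := 1)) hregion k j
    exact ⟨C, hC₀, fun E hE y hy => (hC E hE y hy).trans_eq (by rw [zero_sub, mul_right_comm])⟩

namespace IsBddDiffeoPair

theorem expConj_expConj (h : IsBddDiffeoPair v w) (hy : 0 < y) (E : ℝ) :
    expConj w (expConj v y E) E = y := by
  rw [expConj, expConj, Real.log_exp, h.right_left, Real.exp_log hy]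

theorem image_expConj_Ioi (h : IsBddDiffeoPair v w) (hε : 0 < ε) (E : ℝ) :
    (fun y => expConj v y E) '' Ioi ε = Ioi (expConj v ε E) := by
  refine Subset.antisymm ?_ fun z hz => ?_
  · rintro _ ⟨y, hy, rfl⟩
    exact h.left.strictMonoOn_expConj E hε (hε.trans hy) hy
  · have hz₀ : 0 < z := (expConj_pos v ε E).trans hz
    have hlt := h.right.strictMonoOn_expConj E (expConj_pos v ε E) hz₀ hz
    simp only [h.expConj_expConj hε] at hlt
    exact ⟨expConj w z E, hlt, h.symm.expConj_expConj hz₀ E⟩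

theorem inverse_expConj (h : IsBddDiffeoPair v w) (hε : 0 < ε) (hE : 0 < E) :
    StrictMonoOn (fun y => expConj v y E) (Ioi ε) ∧
      (∀ y ∈ Ioi ε, expConj w (expConj v y E) E = y) ∧
      (∀ z ∈ Ioi (expConj v ε E), expConj v (expConj w z E) E = z) ∧
      ∀ n : ℕ, ContDiffOn ℝ n (fun z => expConj w z E) (Ioi (expConj v ε E)) :=
  ⟨(h.left.strictMonoOn_expConj E).mono (Ioi_subset_Ioi hε.le),
    fun _ hy => h.expConj_expConj (hε.trans hy) E,
    fun _ hz => h.symm.expConj_expConj ((expConj_pos v ε E).trans hz) E,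
    fun n => (h.right.contDiffOn_expConj n).comp (f := fun z => (z, E))
      (contDiffOn_id.prodMk contDiffOn_const) fun _ hz => ⟨(expConj_pos v ε E).trans hz, hE⟩⟩

theorem exists_abs_iteratedDerivWithin_expConj_le (h : IsBddDiffeoPair v w) (hε : 0 < ε) {J : Set ℝ}
    (hJ : IsOpen J) (hJ₀ : J ⊆ Ioi 0) (k ℓ : ℕ) :
    ∃ C > 0, ∀ E ∈ J, ∀ z ∈ Ioi (expConj v ε E), |iteratedDerivWithin k
      (fun E => iteratedDerivWithin ℓ (fun z => expConj w z E) (Ioi (expConj v ε E)) z) J E| ≤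
        C * E ^ (-(k : ℝ)) * z ^ ((1 : ℝ) - ℓ) := by
  obtain ⟨b, hb⟩ := h.left.exists_mapsTo_rightOf (Real.log ε - 1)
  refine h.right.exists_abs_iteratedDerivWithin_expConj_le (a := b) hJ hJ₀ ?_ (fun E _ => ?_) k ℓ
  · exact (h.left.contDiffOn_expConj 0).continuousOn.comp
      (continuousOn_const.prodMk continuousOn_id) fun E hE => ⟨hε, hJ₀ hE⟩
  · exact Real.exp_le_exp.2 (le_of_lt (hb (mem_rightOf_sub_one (Real.log ε, Real.log E))))

end IsBddDiffeoPair

namespace IsLogNormalForm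

variable {U : ℝ → ℝ} {s : ℝ}

theorem expConj_sqrt_mul_eq_one (h : IsLogNormalForm U s v) {x : ℝ} (hE : 0 < E)
    (hx : Real.exp s ≤ x) (hUx : U x = E) : expConj v (√E * x) E = 1 := by
  have hx₀ : 0 < x := (Real.exp_pos s).trans_le hx
  have hlog : Real.log (√E * x) - Real.log E / 2 = Real.log x := by
    rw [Real.log_mul (Real.sqrt_pos.2 hE).ne' hx₀.ne', Real.log_sqrt hE.le]
    ring
  rw [expConj, h.eq_zero, Real.exp_zero] <;> simp only [hlog]
  · exact (Real.le_log_iff_exp_le hx₀).2 hx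
  · rw [Real.exp_log hx₀, Real.exp_log hE, hUx]

theorem one_sub_inv_mul_eq (h : IsLogNormalForm U s v) (hv : IsBddDiffeo v) (hE : 0 < E)
    (hy : 0 < y) (hs : s ≤ Real.log y - Real.log E / 2) :
    1 - E⁻¹ * U (E ^ (-(1 : ℝ) / 2) * y) =
      deriv (fun y => expConj v y E) y ^ 2 * (1 - (expConj v y E ^ 2)⁻¹) := by
  have harg : E ^ (-(1 : ℝ) / 2) * y = Real.exp (Real.log y - Real.log E / 2) := by
    rw [Real.rpow_def_of_pos hE, sub_eq_add_neg, Real.exp_add, Real.exp_log hy]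
    ring_nf
  have hexp : ∀ x : ℝ, Real.exp (2 * x) = Real.exp x ^ 2 := fun x => by
    rw [← Real.exp_nat_mul, Nat.cast_ofNat]
  have hode := h.ode (Real.log y, Real.log E) hs
  simp only [Real.exp_neg, Real.exp_log hE, neg_mul, hexp, Real.exp_log hy, ← harg] at hode
  rw [(hv.hasDerivAt_expConj hy E).deriv]
  refine mul_right_cancel₀ (pow_ne_zero 2 hy.ne') (hode.trans ?_)
  rw [expConj]
  field_simp

end IsLogNormalForm

end ExpConj

theorem exists_lowEnergy_bound {U : ℝ → ℝ} {ε Ec : ℝ}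
    (hUpos : ∀ a, ∃ c > 0, ∀ x ∈ Ioc 0 a, c ≤ U x) (hEc : 0 < Ec) (s : ℝ) :
    ∃ E₀, 0 < E₀ ∧ E₀ ≤ Ec ∧
      (∀ E ∈ Ioo 0 E₀, s ≤ Real.log ε - Real.log E / 2) ∧
      ∀ E ∈ Ioo 0 E₀, ∀ x > 0, U x = E → Real.exp s ≤ x := by
  obtain ⟨c, hc, hcU⟩ := hUpos (Real.exp s)
  refine ⟨min Ec (min c (Real.exp (2 * (Real.log ε - s)))), lt_min hEc (lt_min hc (Real.exp_pos _)),
    min_le_left _ _, fun E hE => ?_, fun E hE x hx hUE => ?_⟩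
  · have hlog := (Real.log_lt_iff_lt_exp hE.1).2
      (hE.2.trans_le ((min_le_right _ _).trans (min_le_right _ _)))
    linarith
  · by_contra! hxs
    have hE_lt : E < c := hE.2.trans_le ((min_le_right _ _).trans (min_le_left _ _))
    exact hE_lt.not_ge ((hcU x ⟨hx, hxs.le⟩).trans_eq hUE)

theorem normal_form_change_of_variables_general
    {U : ℝ → ℝ} {κ ε Ec : ℝ}
    (hU : ContDiffOn ℝ ∞ U (Ioi 0))
    (hUpos : ∀ a, ∃ c > 0, ∀ x ∈ Ioc 0 a, c ≤ U x)
    (hκ : 0 < κ) (hUκ : IsSymbol (-3) fun t => U t - κ / t ^ 2)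
    (hε : 0 < ε) (hEc : 0 < Ec)
    {x₁ : ℝ → ℝ} (hx₁ : ∀ E ∈ Ioo 0 Ec, 0 < x₁ E ∧ U (x₁ E) = E) :
    ∃ E₀, 0 < E₀ ∧ E₀ ≤ Ec ∧ ∃ ξ : ℝ → ℝ → ℝ,
      (∀ n : ℕ, ContDiffOn ℝ n (fun p : ℝ × ℝ => ξ p.1 p.2)
        (Ioi ε ×ˢ Ioo 0 E₀)) ∧
      (∀ E ∈ Ioo 0 E₀, ξ (√E * x₁ E) E = 1) ∧
      (∀ E ∈ Ioo 0 E₀, ∀ y ∈ Ioi ε,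
        1 - E⁻¹ * U (E ^ (-(1 : ℝ) / 2) * y)
          = (deriv (fun y' => ξ y' E) y) ^ 2 * (1 - ((ξ y E) ^ 2)⁻¹)) ∧
      (∃ ξ₀ : ℝ → ℝ, ∃ ρ₀ : ℝ → ℝ → ℝ,
        (∀ E ∈ Ioo 0 E₀, ∀ y ∈ Ioi (1 : ℝ), ξ y E = y + ξ₀ E + y⁻¹ * ρ₀ y E) ∧
        (∀ k : ℕ, ∃ C > 0, ∀ E ∈ Ioo 0 E₀,
          |iteratedDerivWithin k ξ₀ (Ioo 0 E₀) E| ≤ C * E ^ (-(k : ℝ))) ∧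
        (∀ k j : ℕ, ∃ C > 0, ∀ E ∈ Ioo 0 E₀, ∀ y ∈ Ioi (1 : ℝ),
          |iteratedDerivWithin k
              (fun E' => iteratedDerivWithin j (fun y' => ρ₀ y' E') (Ioi 1) y)
              (Ioo 0 E₀) E|
            ≤ C * y ^ (-(j : ℝ)) * E ^ (-(k : ℝ)))) ∧
      (∀ k ℓ : ℕ, ∃ C > 0, ∀ E ∈ Ioo 0 E₀, ∀ y ∈ Ioi ε,
        |iteratedDerivWithin k
            (fun E' => iteratedDerivWithin ℓ (fun y' => ξ y' E') (Ioi ε) y)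
            (Ioo 0 E₀) E|
          ≤ C * E ^ (-(k : ℝ)) * y ^ ((1 : ℝ) - ℓ)) ∧
      (∃ yI : ℝ → ℝ → ℝ,
        (∀ E ∈ Ioo 0 E₀,
          StrictMonoOn (fun y' => ξ y' E) (Ioi ε) ∧
          (∀ y ∈ Ioi ε, yI (ξ y E) E = y) ∧
          (∀ z ∈ (fun y' => ξ y' E) '' Ioi ε, ξ (yI z E) E = z) ∧
          (∀ n : ℕ, ContDiffOn ℝ n (fun z => yI z E) ((fun y' => ξ y' E) '' Ioi ε))) ∧
        (∃ y₀ : ℝ → ℝ, ∃ ρ₀' : ℝ → ℝ → ℝ,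
          (∀ E ∈ Ioo 0 E₀, ∀ z ∈ ((fun y' => ξ y' E) '' Ioi ε) ∩ Ioi (1 : ℝ),
            yI z E = z + y₀ E + z⁻¹ * ρ₀' z E) ∧
          (∀ k : ℕ, ∃ C > 0, ∀ E ∈ Ioo 0 E₀,
            |iteratedDerivWithin k y₀ (Ioo 0 E₀) E| ≤ C * E ^ (-(k : ℝ))) ∧
          (∀ k j : ℕ, ∃ C > 0, ∀ E ∈ Ioo 0 E₀,
            ∀ z ∈ ((fun y' => ξ y' E) '' Ioi ε) ∩ Ioi (1 : ℝ),
            |iteratedDerivWithin k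
                (fun E' => iteratedDerivWithin j (fun z' => ρ₀' z' E') (Ioi 1) z)
                (Ioo 0 E₀) E|
              ≤ C * z ^ (-(j : ℝ)) * E ^ (-(k : ℝ)))) ∧
        (∀ k ℓ : ℕ, ∃ C > 0, ∀ E ∈ Ioo 0 E₀,
          ∀ z ∈ (fun y' => ξ y' E) '' Ioi ε,
          |iteratedDerivWithin k
              (fun E' => iteratedDerivWithin ℓ (fun z' => yI z' E')
                ((fun y' => ξ y' E') '' Ioi ε) z)
              (Ioo 0 E₀) E|
            ≤ C * E ^ (-(k : ℝ)) * z ^ ((1 : ℝ) - ℓ))) := by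
  obtain ⟨v, w, c, s, hvw, hv, hw, hnf⟩ := exists_isLogNormalForm hU hκ hUκ
  obtain ⟨E₀, hE₀, hE₀c, hlow, hturn⟩ := exists_lowEnergy_bound (ε := ε) hUpos hEc s
  have hJ₀ : Ioo 0 E₀ ⊆ Ioi 0 := Ioo_subset_Ioi_self
  have hε₀ : ∀ y ∈ Ioi ε, 0 < y := fun y hy => hε.trans hy
  obtain ⟨y₀, ρ₀, hy, hy₀, hρ₀⟩ := hw.exists_expansion_expConj E₀
  refine ⟨E₀, hE₀, hE₀c, expConj v,
    fun n => (hvw.left.contDiffOn_expConj n).mono (prod_mono hε₀ hJ₀), fun E hE => ?_,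
    fun E hE y hy => hnf.one_sub_inv_mul_eq hvw.left hE.1 (hε₀ y hy) ?_,
    hv.exists_expansion_expConj E₀,
    hvw.left.exists_abs_iteratedDerivWithin_expConj_le isOpen_Ioo hJ₀ continuousOn_const
      fun _ _ => (Real.exp_log hε).le, expConj w, ?_⟩
  · obtain ⟨hx, hUx⟩ := hx₁ E ⟨hE.1, hE.2.trans_le hE₀c⟩
    exact hnf.expConj_sqrt_mul_eq_one hE.1 (hturn E hE _ hx hUx) hUx
  · exact (hlow E hE).trans (sub_le_sub_right (Real.log_lt_log hε hy).le _)
  · simp only [hvw.image_expConj_Ioi hε]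
    exact ⟨fun E hE => hvw.inverse_expConj hε hE.1,
      ⟨y₀, ρ₀, fun E hE z hz => hy E hE z hz.2, hy₀, fun k j => (hρ₀ k j).imp fun C hC =>
        ⟨hC.1, fun E hE z hz => hC.2 E hE z hz.2⟩⟩,
      hvw.exists_abs_iteratedDerivWithin_expConj_le hε isOpen_Ioo hJ₀⟩

section ModifiedPotential

variable {V f g : ℝ → ℝ} {μ h m : ℝ}

theorem IsSymbol.add (hf : IsSymbol m f) (hg : IsSymbol m g) (hfs : ContDiffOn ℝ ∞ f (Ioi 0))
    (hgs : ContDiffOn ℝ ∞ g (Ioi 0)) : IsSymbol m fun x => f x + g x := fun k => by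
  obtain ⟨C, hC₀, hC⟩ := hf k
  obtain ⟨D, hD₀, hD⟩ := hg k
  refine ⟨C + D, add_pos hC₀ hD₀, fun x hx => ?_⟩
  have hcontDiffAt : ∀ {f : ℝ → ℝ}, ContDiffOn ℝ ∞ f (Ioi 0) → ContDiffAt ℝ k f x := fun hf =>
    (hf.contDiffAt (Ioi_mem_nhds (one_pos.trans_le hx))).of_le (by exact_mod_cast le_top)
  rw [iteratedDeriv_fun_add (hcontDiffAt hfs) (hcontDiffAt hgs), add_mul]
  exact (abs_add_le _ _).trans (add_le_add (hC x hx) (hD x hx))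

theorem isSymbol_of_bddSmooth {a : ℝ} (ha : a < 0)
    (hf : BddSmooth (fun u => Real.exp (-m * u) * f (Real.exp u)) (Ioi a)) : IsSymbol m f := by
  intro k
  obtain ⟨C, hC₀, hC⟩ := exists_abs_iteratedDeriv_iteratedDeriv_le (m := m) (f := fun y _ => f y)
    (isOpen_rightOf a) (hf.comp HasBddDerivs.fst fun _ hp => hp) (fun p hp => by
      rw [Real.exp_log hp.1.1, neg_mul, Real.exp_neg, mul_comm m, ← Real.rpow_def_of_pos hp.1.1,
        mul_inv_cancel_left₀ (Real.rpow_pos_of_pos hp.1.1 m).ne']) 0 k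
  refine ⟨C, hC₀, fun x hx => ?_⟩
  simpa using hC (x, 1) ⟨⟨one_pos.trans_le hx, one_pos⟩, ha.trans_le (Real.log_nonneg hx)⟩

theorem contDiff_inv_one_add_sq {n : WithTop ℕ∞} : ContDiff ℝ n fun x : ℝ => (1 + x ^ 2)⁻¹ :=
  (contDiff_const.add (contDiff_id.pow 2)).inv fun x => by positivity

theorem isSymbol_inv_one_add_sq_sub (c : ℝ) :
    IsSymbol (-3) fun x => c * ((1 + x ^ 2)⁻¹ - (x ^ 2)⁻¹) := by
  have hexp : BddSmooth (fun u => Real.exp (-u)) (Ioi (-1)) := .exp_neg_Ioi (-1)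
  have hinv : BddSmooth (fun u => (1 + Real.exp (-u) * Real.exp (-u))⁻¹) (Ioi (-1)) :=
    ((HasBddDerivs.const 1).add (hexp.mul hexp)).inv one_pos fun u _ =>
      le_add_of_nonneg_right (by positivity)
  refine isSymbol_of_bddSmooth neg_one_lt_zero
    (((hexp.mul hinv).const_mul (-c)).congr isOpen_Ioi fun u _ => ?_)
  have hexp₃ : Real.exp (-(-3) * u) = Real.exp u ^ 3 := by
    rw [← Real.exp_nat_mul, neg_neg, Nat.cast_ofNat]
  simp only [hexp₃, Real.exp_neg]
  field_simp
  ring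

theorem contDiff_V0 {n : WithTop ℕ∞} (hV : ContDiff ℝ n V) : ContDiff ℝ n (V0 V h) :=
  hV.add (contDiff_const.mul contDiff_inv_one_add_sq)

theorem exists_pos_le_V0 (hV : Continuous V) (hVpos : ∀ x, 0 < V x) (a : ℝ) :
    ∃ c > 0, ∀ x ∈ Ioc 0 a, c ≤ V0 V h x := by
  obtain ⟨c, hc, hcV⟩ := isCompact_Icc.exists_forall_le' (a := 0) hV.continuousOn
    fun x _ => hVpos x
  exact ⟨c, hc, fun x hx => (hcV x (Ioc_subset_Icc_self hx)).trans
    (le_add_of_nonneg_right (by positivity))⟩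

theorem isSymbol_V0_sub (hV : ContDiff ℝ ∞ V) (hVμ : IsSymbol (-3) fun t => V t - μ ^ 2 / t ^ 2) :
    IsSymbol (-3) fun t => V0 V h t - (μ ^ 2 + h ^ 2 / 4) / t ^ 2 := by
  have hpow : ∀ x ∈ Ioi (0 : ℝ), x ^ 2 ≠ 0 := fun x hx => pow_ne_zero 2 (ne_of_gt hx)
  have hsum := hVμ.add (isSymbol_inv_one_add_sq_sub (h ^ 2 / 4))
    (hV.contDiffOn.sub (contDiffOn_const.div (contDiffOn_id.pow 2) hpow))
    (contDiffOn_const.mul (contDiff_inv_one_add_sq.contDiffOn.sub ((contDiffOn_id.pow 2).inv hpow)))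
  convert hsum using 2
  rw [V0]
  ring

end ModifiedPotential

/-- for fixed `ε > 0` there exist `E₀ > 0` small and a smooth normal-form
change of variables `ξ(y,E)` on `(ε,∞)×(0,E₀)` with `ξ(√E x₁(E),E) = 1`,
`1 − E⁻¹V₀(E^{-1/2}y) = (∂_yξ)²(1 − ξ⁻²)`, `ξ(y,E) = y + ξ₀(E) + y⁻¹ρ₀(y,E)`,
derivative bounds `|∂_E^k∂_y^ℓ ξ| ≤ C E^{−k}y^{1−ℓ}`, bounds on `ξ₀, ρ₀`, and for each
`E` the map `y ↦ ξ(y,E)` is a global diffeomorphism whose inverse satisfies the analogous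
expansion and bounds relative to `ξ`. -/
theorem normal_form_change_of_variables
    (V : ℝ → ℝ) (μp h ε Ec : ℝ)
    (hVsmooth : ∀ n : ℕ, ContDiff ℝ n V)
    (hVpos : ∀ x, 0 < V x)
    (hμp : μp ≠ 0)
    (hVp : ∀ k : ℕ, ∃ C > 0, ∀ x : ℝ, 1 ≤ x →
      |iteratedDeriv k (fun t => V t - μp ^ 2 / t ^ 2) x| ≤ C * x ^ (-3 - k : ℝ))
    (hh : h ∈ Set.Ioo (0 : ℝ) 1)
    (hnorm : μp ^ 2 + h ^ 2 / 4 = 2)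
    (hε : 0 < ε) (hEc : 0 < Ec)
    (x₁ : ℝ → ℝ)
    (hx₁ : ∀ E ∈ Set.Ioo 0 Ec,
      0 < x₁ E ∧ V0 V h (x₁ E) = E ∧ ∀ x, 0 < x → V0 V h x = E → x = x₁ E) :
    ∃ E₀, 0 < E₀ ∧ E₀ ≤ Ec ∧ ∃ ξ : ℝ → ℝ → ℝ,
      -- ξ is smooth on (ε,∞)×(0,E₀)
      (∀ n : ℕ, ContDiffOn ℝ n (fun p : ℝ × ℝ => ξ p.1 p.2)
        (Set.Ioi ε ×ˢ Set.Ioo 0 E₀)) ∧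
      -- normalization at the turning point
      (∀ E ∈ Set.Ioo 0 E₀, ξ (Real.sqrt E * x₁ E) E = 1) ∧
      -- the defining identity 1 − E⁻¹V₀(E^{-1/2}y) = (∂_yξ)²(1 − ξ⁻²)
      (∀ E ∈ Set.Ioo 0 E₀, ∀ y ∈ Set.Ioi ε,
        1 - E⁻¹ * V0 V h (E ^ (-(1 : ℝ) / 2) * y)
          = (deriv (fun y' => ξ y' E) y) ^ 2 * (1 - ((ξ y E) ^ 2)⁻¹)) ∧
      -- expansion ξ(y,E) = y + ξ₀(E) + y⁻¹ρ₀(y,E) with bounds on (1,∞)×(0,E₀)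
      (∃ ξ₀ : ℝ → ℝ, ∃ ρ₀ : ℝ → ℝ → ℝ,
        (∀ E ∈ Set.Ioo 0 E₀, ∀ y ∈ Set.Ioi (1 : ℝ), ξ y E = y + ξ₀ E + y⁻¹ * ρ₀ y E) ∧
        (∀ k : ℕ, ∃ C > 0, ∀ E ∈ Set.Ioo 0 E₀,
          |iteratedDerivWithin k ξ₀ (Set.Ioo 0 E₀) E| ≤ C * E ^ (-(k : ℝ))) ∧
        (∀ k j : ℕ, ∃ C > 0, ∀ E ∈ Set.Ioo 0 E₀, ∀ y ∈ Set.Ioi (1 : ℝ),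
          |iteratedDerivWithin k
              (fun E' => iteratedDerivWithin j (fun y' => ρ₀ y' E') (Set.Ioi 1) y)
              (Set.Ioo 0 E₀) E|
            ≤ C * y ^ (-(j : ℝ)) * E ^ (-(k : ℝ)))) ∧
      -- derivative bounds |∂_E^k∂_y^ℓ ξ| ≤ C E^{−k} y^{1−ℓ}
      (∀ k ℓ : ℕ, ∃ C > 0, ∀ E ∈ Set.Ioo 0 E₀, ∀ y ∈ Set.Ioi ε,
        |iteratedDerivWithin k
            (fun E' => iteratedDerivWithin ℓ (fun y' => ξ y' E') (Set.Ioi ε) y)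
            (Set.Ioo 0 E₀) E|
          ≤ C * E ^ (-(k : ℝ)) * y ^ ((1 : ℝ) - ℓ)) ∧
      -- for fixed E, y ↦ ξ(y,E) is a global diffeomorphism with inverse yI(·,E)
      (∃ yI : ℝ → ℝ → ℝ,
        (∀ E ∈ Set.Ioo 0 E₀,
          StrictMonoOn (fun y' => ξ y' E) (Set.Ioi ε) ∧
          (∀ y ∈ Set.Ioi ε, yI (ξ y E) E = y) ∧
          (∀ z ∈ (fun y' => ξ y' E) '' Set.Ioi ε, ξ (yI z E) E = z) ∧
          (∀ n : ℕ, ContDiffOn ℝ n (fun z => yI z E) ((fun y' => ξ y' E) '' Set.Ioi ε))) ∧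
        -- expansion of the inverse: y(ξ,E) = ξ + y₀(E) + ξ⁻¹ρ̃₀(ξ,E) with bounds
        (∃ y₀ : ℝ → ℝ, ∃ ρ₀' : ℝ → ℝ → ℝ,
          (∀ E ∈ Set.Ioo 0 E₀, ∀ z ∈ ((fun y' => ξ y' E) '' Set.Ioi ε) ∩ Set.Ioi (1 : ℝ),
            yI z E = z + y₀ E + z⁻¹ * ρ₀' z E) ∧
          (∀ k : ℕ, ∃ C > 0, ∀ E ∈ Set.Ioo 0 E₀,
            |iteratedDerivWithin k y₀ (Set.Ioo 0 E₀) E| ≤ C * E ^ (-(k : ℝ))) ∧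
          (∀ k j : ℕ, ∃ C > 0, ∀ E ∈ Set.Ioo 0 E₀,
            ∀ z ∈ ((fun y' => ξ y' E) '' Set.Ioi ε) ∩ Set.Ioi (1 : ℝ),
            |iteratedDerivWithin k
                (fun E' => iteratedDerivWithin j (fun z' => ρ₀' z' E') (Set.Ioi 1) z)
                (Set.Ioo 0 E₀) E|
              ≤ C * z ^ (-(j : ℝ)) * E ^ (-(k : ℝ)))) ∧
        -- derivative bounds |∂_E^k∂_ξ^ℓ y| ≤ C E^{−k} ξ^{1−ℓ}
        (∀ k ℓ : ℕ, ∃ C > 0, ∀ E ∈ Set.Ioo 0 E₀,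
          ∀ z ∈ (fun y' => ξ y' E) '' Set.Ioi ε,
          |iteratedDerivWithin k
              (fun E' => iteratedDerivWithin ℓ (fun z' => yI z' E')
                ((fun y' => ξ y' E') '' Set.Ioi ε) z)
              (Set.Ioo 0 E₀) E|
            ≤ C * E ^ (-(k : ℝ)) * z ^ ((1 : ℝ) - ℓ))) :=
  normal_form_change_of_variables_general (contDiff_V0 (contDiff_infty.2 hVsmooth)).contDiffOn
    (exists_pos_le_V0 (hVsmooth 0).continuous hVpos) (hnorm ▸ two_pos)
    (isSymbol_V0_sub (contDiff_infty.2 hVsmooth) hVp) hε hEc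
    fun E hE => (hx₁ E hE).imp_right And.left
end

section
/- On a region where ζ < 0, one has the exact identity q^{-1/4} d²(q^{1/4})/dζ² = 5/(16ζ²) + q^{-1} [ (1/4) V₀''/Q₀ − (5/16) (V₀'/Q₀)² ], and consequently Ṽ := (1/4)q^{-1}⟨x⟩^{-2} − q^{-1/4} d²(q^{1/4})/dζ² = −5/(16ζ²) + q^{-1} [ (1/4)⟨x⟩^{-2} − (1/4) V₀''/Q₀ + (5/16) (V₀'/Q₀)² ], where V₀', V₀'' are derivatives with respect to x and d/dζ denotes differentiation with respect to ζ. -/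
/-!
Since `dζ/dx = √q = s ^ 2` for `s = q ^ (1/4)`, one has `d/dζ = s⁻² d/dx`. Hence `ds/dζ = l / s`,
where `l = s' / s` is the logarithmic derivative in `x`, and a second application gives
`s⁻¹ d²s/dζ² = (l' - l ^ 2) / s ^ 4`. Now `4 l = Q' / Q - √q / ζ` for `q = -Q / ζ`. In
`l' - l ^ 2` the cross terms `√q Q' / (ζ Q)` cancel, and the terms in `q / ζ ^ 2` add up to
`(1/4 + 1/8 - 1/16) q / ζ ^ 2`, the source of the constant `5/16`.
-/

open Filter Topology

section ChangeOfVariables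

variable {𝕜 F : Type*} [NontriviallyNormedField 𝕜] [CompleteSpace 𝕜] [NormedAddCommGroup F]
  [NormedSpace 𝕜 F] {ζ ζinv : 𝕜 → 𝕜} {x : 𝕜}

theorem hasDerivAt_comp_leftInverse {f : 𝕜 → F} {f' : F} {p : 𝕜} (hf : HasDerivAt f f' x)
    (hζ : HasStrictDerivAt ζ p x) (hp : p ≠ 0) (hinv : ∀ᶠ y in 𝓝 x, ζinv (ζ y) = y) :
    HasDerivAt (fun z => f (ζinv z)) (p⁻¹ • f') (ζ x) :=
  HasDerivAt.scomp_of_eq (ζ x) hf (hζ.to_local_left_inverse hp hinv).hasDerivAt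
    hinv.self_of_nhds.symm

theorem deriv_deriv_comp_leftInverse {f f' : 𝕜 → F} {f'' : F} {p : 𝕜 → 𝕜}
    (hf : ∀ᶠ y in 𝓝 x, HasDerivAt f (f' y) y)
    (hf' : HasDerivAt (fun y => (p y)⁻¹ • f' y) f'' x)
    (hζ : ∀ᶠ y in 𝓝 x, HasStrictDerivAt ζ (p y) y) (hp : ∀ᶠ y in 𝓝 x, p y ≠ 0)
    (hinv : ∀ᶠ y in 𝓝 x, ζinv (ζ y) = y) :
    deriv (deriv fun z => f (ζinv z)) (ζ x) = (p x)⁻¹ • f'' := by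
  have hζx := hζ.self_of_nhds
  have hpx := hp.self_of_nhds
  have hfirst : deriv (fun z => f (ζinv z)) =ᶠ[𝓝 (ζ x)]
      fun z => (p (ζinv z))⁻¹ • f' (ζinv z) := by
    rw [← hζx.map_nhds_eq hpx, EventuallyEq, eventually_map]
    filter_upwards [hf, hζ, hp, hinv, hinv.eventually_nhds] with y hfy hζy hpy hy hinvy
    rw [(hasDerivAt_comp_leftInverse hfy hζy hpy hinvy).deriv, hy]
  rw [hfirst.deriv_eq, (hasDerivAt_comp_leftInverse hf' hζx hpx hinv).deriv]

theorem inv_mul_deriv_deriv_comp_leftInverse_of_sq {s l : 𝕜 → 𝕜} {l' : 𝕜}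
    (hs : ∀ᶠ y in 𝓝 x, HasDerivAt s (s y * l y) y) (hsx : s x ≠ 0) (hl : HasDerivAt l l' x)
    (hζ : ∀ᶠ y in 𝓝 x, HasStrictDerivAt ζ (s y ^ 2) y)
    (hinv : ∀ᶠ y in 𝓝 x, ζinv (ζ y) = y) :
    (s x)⁻¹ * deriv (deriv fun z => s (ζinv z)) (ζ x) = (l' - l x ^ 2) / s x ^ 4 := by
  have hs_ne : ∀ᶠ y in 𝓝 x, s y ≠ 0 := hs.self_of_nhds.continuousAt.eventually_ne hsx
  have hquot : (fun y => (s y ^ 2)⁻¹ • (s y * l y)) =ᶠ[𝓝 x] fun y => l y / s y := by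
    filter_upwards [hs_ne] with y hy
    rw [smul_eq_mul]
    field_simp
  have hsecond := (hl.fun_div hs.self_of_nhds hsx).congr_of_eventuallyEq hquot
  rw [deriv_deriv_comp_leftInverse hs hsecond hζ (hs_ne.mono fun y hy => pow_ne_zero 2 hy) hinv,
    smul_eq_mul]
  field_simp

end ChangeOfVariables

section LogarithmicDerivatives

theorem hasDerivAt_div_of_ne_zero {𝕜 : Type*} [NontriviallyNormedField 𝕜] {f g : 𝕜 → 𝕜}
    {f' g' x : 𝕜} (hf : HasDerivAt f f' x) (hg : HasDerivAt g g' x) (hfx : f x ≠ 0)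
    (hgx : g x ≠ 0) :
    HasDerivAt (fun y => f y / g y) (f x / g x * (f' / f x - g' / g x)) x :=
  (hf.fun_div hg hgx).congr_deriv (by field_simp)

theorem hasDerivAt_rpow_of_hasDerivAt_mul {q : ℝ → ℝ} {l x : ℝ} (hq : HasDerivAt q (q x * l) x)
    (hqx : 0 < q x) (p : ℝ) : HasDerivAt (fun y => q y ^ p) (q x ^ p * (p * l)) x := by
  convert hq.rpow_const (p := p) (Or.inl hqx.ne') using 1
  rw [Real.rpow_sub_one hqx.ne']
  field_simp

theorem hasDerivAt_sqrt_of_hasDerivAt_mul {q : ℝ → ℝ} {l x : ℝ} (hq : HasDerivAt q (q x * l) x)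
    (hqx : 0 < q x) : HasDerivAt (fun y => √(q y)) (√(q x) * (1 / 2 * l)) x := by
  simpa only [Real.sqrt_eq_rpow] using hasDerivAt_rpow_of_hasDerivAt_mul hq hqx (1 / 2)

end LogarithmicDerivatives

section QuarterPower

theorem rpow_quarter_sq {q : ℝ} (hq : 0 ≤ q) : (q ^ ((1 : ℝ) / 4)) ^ 2 = √q := by
  rw [Real.sqrt_eq_rpow, ← Real.rpow_mul_natCast hq]
  norm_num

theorem rpow_quarter_mul_deriv_deriv_comp_leftInverse {q l ζ ζinv : ℝ → ℝ} {l' x : ℝ}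
    (hq : ∀ᶠ y in 𝓝 x, HasDerivAt q (q y * l y) y) (hqx : 0 < q x) (hl : HasDerivAt l l' x)
    (hζ : ∀ᶠ y in 𝓝 x, HasDerivAt ζ √(q y) y) (hinv : ∀ᶠ y in 𝓝 x, ζinv (ζ y) = y) :
    q x ^ (-(1 : ℝ) / 4) * deriv (deriv fun z => q (ζinv z) ^ ((1 : ℝ) / 4)) (ζ x) =
      (q x)⁻¹ * (1 / 4 * l' - 1 / 16 * l x ^ 2) := by
  have hqpos : ∀ᶠ y in 𝓝 x, 0 < q y := hq.self_of_nhds.continuousAt.eventually_const_lt hqx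
  have hs : ∀ᶠ y in 𝓝 x, HasDerivAt (fun y => q y ^ ((1 : ℝ) / 4))
      (q y ^ ((1 : ℝ) / 4) * (1 / 4 * l y)) y := by
    filter_upwards [hq, hqpos] with y hqy hy
    exact hasDerivAt_rpow_of_hasDerivAt_mul hqy hy _
  have hζ_strict : ∀ᶠ y in 𝓝 x, HasStrictDerivAt ζ ((q y ^ ((1 : ℝ) / 4)) ^ 2) y := by
    filter_upwards [hζ.eventually_nhds, hq, hqpos] with y hζy hqy hy
    rw [rpow_quarter_sq hy.le]
    exact hasStrictDerivAt_of_hasDerivAt_of_continuousAt hζy hqy.continuousAt.sqrt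
  have hfourth : (q x ^ ((1 : ℝ) / 4)) ^ 4 = q x := by
    rw [pow_mul _ 2 2, rpow_quarter_sq hqx.le, Real.sq_sqrt hqx.le]
  have hmain := inv_mul_deriv_deriv_comp_leftInverse_of_sq hs
    (Real.rpow_pos_of_pos hqx _).ne' (hl.const_mul (1 / 4)) hζ_strict hinv
  rw [neg_div, Real.rpow_neg hqx.le, hmain, hfourth]
  ring

theorem rpow_quarter_mul_deriv_deriv_neg_div_comp_leftInverse {Q ζ ζinv : ℝ → ℝ} {x : ℝ}
    (hQ : ContDiffAt ℝ 2 Q x) (hQx : 0 < Q x) (hζx : ζ x < 0)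
    (hζ : ∀ᶠ y in 𝓝 x, HasDerivAt ζ √(-Q y / ζ y) y) (hinv : ∀ᶠ y in 𝓝 x, ζinv (ζ y) = y) :
    (-Q x / ζ x) ^ (-(1 : ℝ) / 4) *
        deriv (deriv fun z => (-Q (ζinv z) / ζ (ζinv z)) ^ ((1 : ℝ) / 4)) (ζ x) =
      5 / (16 * ζ x ^ 2) + (-Q x / ζ x)⁻¹ *
        (1 / 4 * deriv (deriv Q) x / Q x - 5 / 16 * (deriv Q x / Q x) ^ 2) := by
  have hqx : 0 < -Q x / ζ x := div_pos_of_neg_of_neg (neg_lt_zero.2 hQx) hζx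
  have hζ_ne : ζ x ≠ 0 := hζx.ne
  have hQ' : ∀ᶠ y in 𝓝 x, HasDerivAt Q (deriv Q y) y :=
    (hQ.eventually (by simp)).mono fun y hy => (hy.differentiableAt two_ne_zero).hasDerivAt
  have hQ'' : HasDerivAt (deriv Q) (deriv (deriv Q) x) x :=
    ((hQ.derivWithin (m := 1) (by norm_num)).differentiableAt one_ne_zero).hasDerivAt
  have hq : ∀ᶠ y in 𝓝 x, HasDerivAt (fun y => -Q y / ζ y)
      (-Q y / ζ y * (deriv Q y / Q y - √(-Q y / ζ y) / ζ y)) y := by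
    filter_upwards [hQ', hζ, hQ.continuousAt.eventually_ne hQx.ne',
      hζ.self_of_nhds.continuousAt.eventually_ne hζ_ne] with y hQy hζy hQy_ne hζy_ne
    simpa only [neg_div_neg_eq] using
      hasDerivAt_div_of_ne_zero hQy.fun_neg hζy (neg_ne_zero.2 hQy_ne) hζy_ne
  have hsqrt := hasDerivAt_sqrt_of_hasDerivAt_mul hq.self_of_nhds hqx
  have hl : HasDerivAt (fun y => deriv Q y / Q y - √(-Q y / ζ y) / ζ y)
      (deriv (deriv Q) x / Q x - (deriv Q x / Q x) ^ 2 + √(-Q x / ζ x) ^ 2 / ζ x ^ 2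
        - √(-Q x / ζ x) / ζ x * (1 / 2 * (deriv Q x / Q x - √(-Q x / ζ x) / ζ x))) x := by
    refine ((hQ''.fun_div hQ'.self_of_nhds hQx.ne').fun_sub
      (hsqrt.fun_div hζ.self_of_nhds hζ_ne)).congr_deriv ?_
    field_simp
    ring
  calc
    _ = (-Q x / ζ x)⁻¹ * (5 / 16 * √(-Q x / ζ x) ^ 2 / ζ x ^ 2
          + (1 / 4 * deriv (deriv Q) x / Q x - 5 / 16 * (deriv Q x / Q x) ^ 2)) := by
      rw [rpow_quarter_mul_deriv_deriv_comp_leftInverse hq hqx hl hζ hinv]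
      ring
    _ = _ := by
      rw [Real.sq_sqrt hqx.le, mul_add]
      congr 1
      field_simp

end QuarterPower

theorem q_second_derivative_identity_general {V₀ ζ xinv : ℝ → ℝ} {E x : ℝ}
    (hV₀ : ContDiffAt ℝ 2 V₀ x) (hQ₀x : 0 < V₀ x - E) (hζx : ζ x < 0)
    (hζ' : ∀ᶠ y in 𝓝 x, HasDerivAt ζ √(-(V₀ y - E) / ζ y) y)
    (hxinv : ∀ᶠ y in 𝓝 x, xinv (ζ y) = y) :
    ((-(V₀ x - E) / ζ x) ^ (-(1 : ℝ) / 4) *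
        deriv (deriv (fun z => (-(V₀ (xinv z) - E) / ζ (xinv z)) ^ ((1 : ℝ) / 4))) (ζ x)
      = 5 / (16 * ζ x ^ 2)
        + (-(V₀ x - E) / ζ x)⁻¹ *
          (1 / 4 * deriv (deriv V₀) x / (V₀ x - E)
            - 5 / 16 * (deriv V₀ x / (V₀ x - E)) ^ 2)) ∧
    (1 / 4 * (-(V₀ x - E) / ζ x)⁻¹ * (1 + x ^ 2)⁻¹
        - (-(V₀ x - E) / ζ x) ^ (-(1 : ℝ) / 4) *
          deriv (deriv (fun z => (-(V₀ (xinv z) - E) / ζ (xinv z)) ^ ((1 : ℝ) / 4))) (ζ x)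
      = -5 / (16 * ζ x ^ 2)
        + (-(V₀ x - E) / ζ x)⁻¹ *
          (1 / 4 * (1 + x ^ 2)⁻¹ - 1 / 4 * deriv (deriv V₀) x / (V₀ x - E)
            + 5 / 16 * (deriv V₀ x / (V₀ x - E)) ^ 2)) := by
  have hfirst := rpow_quarter_mul_deriv_deriv_neg_div_comp_leftInverse
    (hV₀.sub contDiffAt_const) hQ₀x hζx hζ' hxinv
  simp only [deriv_sub_const_fun] at hfirst
  exact ⟨hfirst, by rw [hfirst]; ring⟩

/-- with `q = −Q₀/ζ`, `Q₀ = V₀ − E > 0`, `ζ < 0`, `dζ/dx = √q`, one has the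
exact identities
`q^{-1/4} d²(q^{1/4})/dζ² = 5/(16ζ²) + q⁻¹ [ (1/4)V₀''/Q₀ − (5/16)(V₀'/Q₀)² ]`
and consequently
`Ṽ = (1/4)q⁻¹⟨x⟩⁻² − q^{-1/4} d²(q^{1/4})/dζ²
   = −5/(16ζ²) + q⁻¹ [ (1/4)⟨x⟩⁻² − (1/4)V₀''/Q₀ + (5/16)(V₀'/Q₀)² ]`,
where functions of `x` are regarded as functions of `ζ` via the inverse `xinv` of `ζ`. -/
theorem q_second_derivative_identity
    (J : Set ℝ) (hJopen : IsOpen J) (hJconv : Convex ℝ J)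
    (V₀ ζ : ℝ → ℝ) (E : ℝ) (hE : 0 < E)
    (hV₀ : ∀ n : ℕ, ContDiffOn ℝ n V₀ J)
    (hV₀pos : ∀ x ∈ J, 0 < V₀ x)
    (hQ₀pos : ∀ x ∈ J, 0 < V₀ x - E)
    (hζ : ∀ n : ℕ, ContDiffOn ℝ n ζ J)
    (hζneg : ∀ x ∈ J, ζ x < 0)
    (hζmono : StrictMonoOn ζ J)
    (hζ' : ∀ x ∈ J, HasDerivAt ζ (Real.sqrt (-(V₀ x - E) / ζ x)) x)
    (xinv : ℝ → ℝ) (hxinv : ∀ x ∈ J, xinv (ζ x) = x) :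
    ∀ x ∈ J,
      ((-(V₀ x - E) / ζ x) ^ (-(1 : ℝ) / 4) *
          deriv (deriv (fun z => (-(V₀ (xinv z) - E) / ζ (xinv z)) ^ ((1 : ℝ) / 4))) (ζ x)
        = 5 / (16 * ζ x ^ 2)
          + (-(V₀ x - E) / ζ x)⁻¹ *
            (1 / 4 * deriv (deriv V₀) x / (V₀ x - E)
              - 5 / 16 * (deriv V₀ x / (V₀ x - E)) ^ 2)) ∧
      (1 / 4 * (-(V₀ x - E) / ζ x)⁻¹ * (1 + x ^ 2)⁻¹
          - (-(V₀ x - E) / ζ x) ^ (-(1 : ℝ) / 4) *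
            deriv (deriv (fun z => (-(V₀ (xinv z) - E) / ζ (xinv z)) ^ ((1 : ℝ) / 4))) (ζ x)
        = -5 / (16 * ζ x ^ 2)
          + (-(V₀ x - E) / ζ x)⁻¹ *
            (1 / 4 * (1 + x ^ 2)⁻¹ - 1 / 4 * deriv (deriv V₀) x / (V₀ x - E)
              + 5 / 16 * (deriv V₀ x / (V₀ x - E)) ^ 2)) := by
  intro x hx
  have hJx : J ∈ 𝓝 x := hJopen.mem_nhds hx
  exact q_second_derivative_identity_general ((hV₀ 2).contDiffAt hJx) (hQ₀pos x hx) (hζneg x hx)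
    (eventually_of_mem hJx hζ') (eventually_of_mem hJx hxinv)
end
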